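/- arXiv:math/0403094 — 12 statements merged into one kernel-verified Lean document; each statement's English description precedes it below -/
import Mathlib

section
/- Let P be a finite bounded poset and let A and B be antichains in P. If A ≤ B in the partial order on antichains, then B* ≤ A*, where * denotes the blocker operation. -/
/-- The blocker of a set `A` in a poset with bottom element: the minimal elements among
those having a common atom with every member of `A`. -/
def blocker {P : Type*} [PartialOrder P] [OrderBot P] (A : Set P) : Set P :=
  {x | (∀ a ∈ A, ∃ l : P, IsAtom l ∧ l ≤ x ∧ l ≤ a) ∧
    ∀ y : P, (∀ a ∈ A, ∃ l : P, IsAtom l ∧ l ≤ y ∧ l ≤ a) → y ≤ x → y = x}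

/-- An antichain in a poset with bottom element, in the sense of Björner–Hultman:
a nonempty set avoiding `⊥` whose elements are pairwise incomparable. -/
def IsAnti {P : Type*} [PartialOrder P] [OrderBot P] (A : Set P) : Prop :=
  A.Nonempty ∧ ⊥ ∉ A ∧ IsAntichain (· ≤ ·) A

/-- The partial order on antichains: `antLE A B` iff for each `b ∈ B` there is
`a ∈ A` with `a ≤ b`. -/
def antLE {P : Type*} [Preorder P] (A B : Set P) : Prop :=
  ∀ b ∈ B, ∃ a ∈ A, a ≤ b

/-- Lemma 2.3(1): if `A ≤ B` then `B* ≤ A*`. -/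
theorem blocker_antitone {P : Type*} [PartialOrder P] [BoundedOrder P] [Fintype P]
    (A B : Set P) (hA : IsAnti A) (hB : IsAnti B) (hAB : antLE A B) :
    antLE (blocker B) (blocker A) := by
  intro x hx
  have hxB : x ∈ {y : P | ∀ b ∈ B, ∃ l : P, IsAtom l ∧ l ≤ y ∧ l ≤ b} := by
    intro b hb
    obtain ⟨a, ha, hab⟩ := hAB b hb
    obtain ⟨l, hl, hlx, hla⟩ := hx.1 a ha
    exact ⟨l, hl, hlx, hla.trans hab⟩
  obtain ⟨m, hmx, hm⟩ := (Set.toFinite _).exists_le_minimal hxB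
  exact ⟨m, ⟨hm.prop, fun y hy hym => le_antisymm hym (hm.le_of_le hy hym)⟩, hmx⟩
end

section
/- Let P be a finite bounded poset and let A be an antichain in P. Then A** ≤ A, where * denotes the blocker operation and ≤ is the partial order on antichains. -/
/-- Lemma 2.3(2): `A** ≤ A`. -/
theorem blocker_blocker_le {P : Type*} [PartialOrder P] [BoundedOrder P] [Fintype P]
    (A : Set P) (hA : IsAnti A) :
    antLE (blocker (blocker A)) A := by
  intro b hb
  obtain ⟨m, hmb, hm⟩ := (Set.toFinite
    {y : P | ∀ a ∈ blocker A, ∃ l : P, IsAtom l ∧ l ≤ y ∧ l ≤ a}).exists_le_minimal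
    (a := b) (by
      intro x hx
      obtain ⟨l, hl, h1, h2⟩ := hx.1 b hb
      exact ⟨l, hl, h2, h1⟩)
  exact ⟨m, ⟨hm.prop, fun y hy hym => le_antisymm hym (hm.le_of_le hy hym)⟩, hmb⟩
end

section
/- Let P be a finite bounded poset and let A be an antichain in P. Then A*** = A*, where * denotes the blocker operation. -/
/-- The set of elements sharing an atom with every member of `A`. -/
def crossing {P : Type*} [PartialOrder P] [OrderBot P] (A : Set P) : Set P :=
  {x | ∀ a ∈ A, ∃ l : P, IsAtom l ∧ l ≤ x ∧ l ≤ a}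

theorem crossing_blocker {P : Type*} [PartialOrder P] [OrderBot P] [Finite P] (A : Set P) :
    crossing (blocker A) = crossing (crossing A) := by
  ext x
  constructor
  · intro hx y hy
    obtain ⟨z, hzy, hz⟩ := (Set.toFinite (crossing A)).exists_le_minimal hy
    obtain ⟨l, hl, hlx, hlz⟩ := hx z ⟨hz.1, fun w hw hwz => le_antisymm hwz (hz.2 hw hwz)⟩
    exact ⟨l, hl, hlx, hlz.trans hzy⟩
  · intro hx y hy
    exact hx y hy.1

theorem crossing_triple {P : Type*} [PartialOrder P] [OrderBot P] (A : Set P) :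
    crossing (crossing (crossing A)) = crossing A := by
  have key : ∀ B : Set P, B ⊆ crossing (crossing B) := by
    intro B b hb x hx
    obtain ⟨l, hl, h1, h2⟩ := hx b hb
    exact ⟨l, hl, h2, h1⟩
  exact Set.Subset.antisymm (fun x hx a ha => hx a (key A ha)) (key _)

theorem blocker_congr {P : Type*} [PartialOrder P] [OrderBot P] {A B : Set P}
    (h : crossing A = crossing B) : blocker A = blocker B := by
  change {x | x ∈ crossing A ∧ ∀ y, y ∈ crossing A → y ≤ x → y = x} =
    {x | x ∈ crossing B ∧ ∀ y, y ∈ crossing B → y ≤ x → y = x}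
  rw [h]

/-- Lemma 2.3(3): `A*** = A*`. -/
theorem blocker_blocker_blocker {P : Type*} [PartialOrder P] [BoundedOrder P] [Fintype P]
    (A : Set P) (hA : IsAnti A) :
    blocker (blocker (blocker A)) = blocker A := by
  apply blocker_congr
  rw [crossing_blocker, crossing_blocker, crossing_triple]
end

section
/- Let V be a finite set, and let P be an induced subposet of the Boolean lattice 2^V (ordered by inclusion) such that ∅, V, and all singletons belong to P. Then, for two antichains A, B ⊆ P, one has B = A* if and only if the following holds: for all U ∈ P, the complement V \ U contains no member of A if and only if U contains a member of B. -/
/-- The blocker of a family `A` inside the subposet of the Boolean lattice `2^V`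
induced by `S ⊆ 2^V` (the members of `S` ordered by inclusion).  Since `S` contains
all singletons, the atoms of this subposet below an element `x` correspond to the
points of `x`, and the blocker condition `Λ(x) ∩ Λ(a) ≠ ∅` becomes `x ∩ a ≠ ∅`;
the blocker consists of the minimal such elements of `S`. -/
def subBlocker {V : Type*} (S : Set (Set V)) (A : Set (Set V)) : Set (Set V) :=
  {x | (x ∈ S ∧ ∀ a ∈ A, (x ∩ a).Nonempty) ∧
    ∀ y : Set V, (y ∈ S ∧ ∀ a ∈ A, (y ∩ a).Nonempty) → y ⊆ x → y = x}

/-- Lemma 2.2: in an induced subposet `S` of `2^V` containing `∅`, `V` and all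
singletons, an antichain `B` equals the blocker `A*` of an antichain `A` if and only
if for all `U ∈ S`: the complement `V \ U` contains no member of `A` iff `U` contains
a member of `B`. -/
theorem subBlocker_iff_propertyC {V : Type*} [Fintype V] (S : Set (Set V))
    (hempty : ∅ ∈ S) (huniv : Set.univ ∈ S) (hsing : ∀ v : V, {v} ∈ S)
    (A B : Set (Set V)) (hAS : A ⊆ S) (hBS : B ⊆ S)
    (hA : A.Nonempty ∧ ∅ ∉ A ∧ IsAntichain (· ⊆ ·) A)
    (hB : B.Nonempty ∧ ∅ ∉ B ∧ IsAntichain (· ⊆ ·) B) :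
    B = subBlocker S A ↔
      ∀ U ∈ S, (∀ a ∈ A, ¬ a ⊆ Uᶜ) ↔ ∃ b ∈ B, b ⊆ U := by
  have key : ∀ U : Set V, (∀ a ∈ A, ¬ a ⊆ Uᶜ) ↔ ∀ a ∈ A, (U ∩ a).Nonempty := by
    intro U
    refine forall₂_congr fun a _ => ?_
    rw [Set.subset_compl_iff_disjoint_left, Set.not_disjoint_iff_nonempty_inter]
  simp only [key]
  constructor
  · rintro rfl U hU
    constructor
    · intro h
      obtain ⟨m, hmU, hm⟩ := (Set.toFinite
        {x : Set V | x ∈ S ∧ ∀ a ∈ A, (x ∩ a).Nonempty}).exists_le_minimal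
        (show U ∈ {x : Set V | x ∈ S ∧ ∀ a ∈ A, (x ∩ a).Nonempty} from ⟨hU, h⟩)
      exact ⟨m, ⟨hm.prop, fun y hy hym => Set.Subset.antisymm hym (hm.le_of_le hy hym)⟩, hmU⟩
    · rintro ⟨b, hb, hbU⟩ a ha
      exact (hb.1.2 a ha).mono (Set.inter_subset_inter_left a hbU)
  · intro h
    have hmeet : ∀ b ∈ B, ∀ a ∈ A, (b ∩ a).Nonempty := fun b hb =>
      (h b (hBS hb)).2 ⟨b, hb, Set.Subset.refl b⟩
    ext x
    constructor
    · intro hx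
      refine ⟨⟨hBS hx, hmeet x hx⟩, fun y hy hyx => ?_⟩
      obtain ⟨b, hb, hby⟩ := (h y hy.1).1 hy.2
      have hbx : b = x := hB.2.2.eq hb hx (hby.trans hyx)
      subst hbx
      exact Set.Subset.antisymm hyx hby
    · intro hx
      obtain ⟨b, hb, hbx⟩ := (h x hx.1.1).1 hx.1.2
      have hbx' : b = x := hx.2 b ⟨hBS hb, hmeet b hb⟩ hbx
      exact hbx' ▸ hb
end

section
/- Let V be a finite set and let P be a well-complemented subposet of the Boolean lattice 2^V, i.e. a subfamily S ⊆ 2^V ordered by inclusion such that ∅ and all singletons belong to S and S is closed under taking complements in V. Then A** = A for every antichain A in P, where * denotes the blocker operation. -/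
/-- In a well-complemented subposet of a Boolean lattice (a family `S ⊆ 2^V`
containing `∅` and all singletons and closed under complementation), every
antichain satisfies `A** = A`. -/
theorem wellComplemented_blocker_blocker {V : Type*} [Fintype V] (S : Set (Set V))
    (hempty : ∅ ∈ S) (hsing : ∀ v : V, {v} ∈ S) (hcompl : ∀ U ∈ S, Uᶜ ∈ S)
    (A : Set (Set V)) (hAS : A ⊆ S)
    (hA : A.Nonempty ∧ ∅ ∉ A ∧ IsAntichain (· ⊆ ·) A) :
    subBlocker S (subBlocker S A) = A := by
  obtain ⟨-, -, hanti⟩ := hA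
  have key : ∀ x, (x ∈ S ∧ ∀ b ∈ subBlocker S A, (x ∩ b).Nonempty) ↔
      (x ∈ S ∧ ∃ a ∈ A, a ⊆ x) := by
    intro x
    constructor
    · rintro ⟨hx, h⟩
      refine ⟨hx, ?_⟩
      by_contra hno
      push Not at hno
      have hxc : xᶜ ∈ {y : Set V | y ∈ S ∧ ∀ a ∈ A, (y ∩ a).Nonempty} := by
        refine ⟨hcompl x hx, fun a ha => ?_⟩
        obtain ⟨v, hv, hvx⟩ := Set.not_subset.mp (hno a ha)
        exact ⟨v, hvx, hv⟩
      obtain ⟨b, hbx, hb⟩ := (Set.toFinite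
        {y : Set V | y ∈ S ∧ ∀ a ∈ A, (y ∩ a).Nonempty}).exists_le_minimal hxc
      have hbB : b ∈ subBlocker S A :=
        ⟨hb.1, fun y hy hyb => Set.Subset.antisymm hyb (hb.2 hy hyb)⟩
      obtain ⟨v, hvx, hvb⟩ := h b hbB
      exact hbx hvb hvx
    · rintro ⟨hx, a, ha, hax⟩
      refine ⟨hx, fun b hb => ?_⟩
      obtain ⟨v, hvb, hva⟩ := hb.1.2 a ha
      exact ⟨v, hax hva, hvb⟩
  ext x
  constructor
  · rintro ⟨hx, hmin⟩
    obtain ⟨-, a, ha, hax⟩ := (key x).1 hx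
    have := hmin a ((key a).2 ⟨hAS ha, a, ha, subset_rfl⟩) hax
    exact this ▸ ha
  · intro hx
    refine ⟨(key x).2 ⟨hAS hx, x, hx, subset_rfl⟩, fun y hy hyx => ?_⟩
    obtain ⟨-, a, ha, hay⟩ := (key y).1 hy
    have := hanti.eq ha hx (hay.trans hyx)
    exact Set.Subset.antisymm hyx (this ▸ hay)
end

section
/- Let P be a finite bounded poset. Then A** = A for all antichains A in P if and only if P satisfies both: (i) for all x, y ∈ P, if Λ(x) ⊆ Λ(y) then x ≤ y; and (ii) for every x ∈ P there exists y ∈ P such that Λ \ Λ(x) = Λ(y). -/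
/-- `Λ(x)`, the set of atoms below `x`. -/
def atomsBelow {P : Type*} [PartialOrder P] [OrderBot P] (x : P) : Set P :=
  {l | IsAtom l ∧ l ≤ x}

/-- Two elements have a common atom with everything in `A`: the up-set defining the blocker. -/
def upB {P : Type*} [PartialOrder P] [OrderBot P] (A : Set P) : Set P :=
  {x | ∀ a ∈ A, ∃ l : P, IsAtom l ∧ l ≤ x ∧ l ≤ a}

theorem exists_blocker_le {P : Type*} [PartialOrder P] [BoundedOrder P] [Fintype P]
    {A : Set P} {u : P} (hu : u ∈ upB A) : ∃ b ∈ blocker A, b ≤ u := by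
  obtain ⟨b, hb, hm⟩ := (Set.toFinite (upB A)).exists_le_minimal hu
  exact ⟨b, ⟨hm.1, fun y hy hyb => le_antisymm hyb (hm.2 hy hyb)⟩, hb⟩

theorem mem_upB_blocker {P : Type*} [PartialOrder P] [BoundedOrder P] [Fintype P]
    {A : Set P} {z : P} :
    z ∈ upB (blocker A) ↔ ∀ u ∈ upB A, ∃ l : P, IsAtom l ∧ l ≤ z ∧ l ≤ u := by
  constructor
  · intro h u hu
    obtain ⟨b, hb, hbu⟩ := exists_blocker_le hu
    obtain ⟨l, h1, h2, h3⟩ := h b hb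
    exact ⟨l, h1, h2, h3.trans hbu⟩
  · intro h b hb
    exact h b hb.1

/-- Theorem 2.4, (1) ⇔ (3): a finite bounded poset satisfies `A** = A` for all
antichains `A` if and only if (i) `Λ(x) ⊆ Λ(y)` implies `x ≤ y`, and (ii) for every
`x` there is `y` with `Λ \ Λ(x) = Λ(y)`. -/
theorem strong_blocker_duality_iff {P : Type*} [PartialOrder P] [BoundedOrder P] [Fintype P] :
    (∀ A : Set P, IsAnti A → blocker (blocker A) = A) ↔
      ((∀ x y : P, atomsBelow x ⊆ atomsBelow y → x ≤ y) ∧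
        (∀ x : P, ∃ y : P, {l : P | IsAtom l} \ atomsBelow x = atomsBelow y)) := by
  constructor
  · intro H
    refine ⟨?_, ?_⟩
    · intro x y hxy
      by_cases hx : x = ⊥
      · simp [hx]
      have hA : IsAnti ({x} : Set P) :=
        ⟨Set.singleton_nonempty x, fun h => hx (Set.mem_singleton_iff.1 h).symm,
          IsAntichain.singleton⟩
      have hy : y ∈ upB (blocker ({x} : Set P)) := by
        rw [mem_upB_blocker]
        intro u hu
        obtain ⟨l, h1, h2, h3⟩ := hu x rfl
        exact ⟨l, h1, (hxy ⟨h1, h3⟩).2, h2⟩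
      obtain ⟨b, hb, hby⟩ := exists_blocker_le hy
      rw [H _ hA] at hb
      rw [Set.mem_singleton_iff] at hb
      exact hb ▸ hby
    · intro x
      by_cases hne : ({l : P | IsAtom l} \ atomsBelow x).Nonempty
      · have hA : IsAnti ({l : P | IsAtom l} \ atomsBelow x) := by
          refine ⟨hne, fun h => h.1.1 rfl, ?_⟩
          intro a ha b hb hab hle
          rcases hb.1.le_iff.1 hle with h | h
          · exact ha.1.1 h
          · exact hab h
        have hx : x ∉ upB (blocker ({l : P | IsAtom l} \ atomsBelow x)) := by
          intro hx
          obtain ⟨b, hb, hbx⟩ := exists_blocker_le hx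
          rw [H _ hA] at hb
          exact hb.2 ⟨hb.1, hbx⟩
        rw [mem_upB_blocker] at hx
        push Not at hx
        obtain ⟨u, hu, hn⟩ := hx
        refine ⟨u, Set.Subset.antisymm ?_ ?_⟩
        · intro a ha
          obtain ⟨l, h1, h2, h3⟩ := hu a ha
          rcases ha.1.le_iff.1 h3 with h | h
          · exact absurd h h1.1
          · exact ⟨ha.1, h ▸ h2⟩
        · intro a ha
          exact ⟨ha.1, fun h => hn a ha.1 h.2 ha.2⟩
      · refine ⟨⊥, ?_⟩
        rw [Set.not_nonempty_iff_eq_empty.1 hne]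
        symm
        rw [Set.eq_empty_iff_forall_notMem]
        intro l hl
        exact hl.1.1 (le_bot_iff.1 hl.2)
  · rintro ⟨h1, h2⟩ A ⟨-, -, hA⟩
    have key : ∀ z ∈ upB (blocker A), ∃ a ∈ A, a ≤ z := by
      intro z hz
      by_contra hcon
      push Not at hcon
      obtain ⟨y, hy⟩ := h2 z
      rw [mem_upB_blocker] at hz
      have hyA : y ∈ upB A := by
        intro a ha
        have h3 : ¬ atomsBelow a ⊆ atomsBelow z := fun h => hcon a ha (h1 _ _ h)
        obtain ⟨l, hl, hlz⟩ := Set.not_subset.1 h3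
        have h4 : l ∈ atomsBelow y := hy ▸ ⟨hl.1, hlz⟩
        exact ⟨l, hl.1, h4.2, hl.2⟩
      obtain ⟨l, ha, hlz, hly⟩ := hz y hyA
      have h4 : l ∈ {l : P | IsAtom l} \ atomsBelow z := hy ▸ ⟨ha, hly⟩
      exact h4.2 ⟨ha, hlz⟩
    have sub : ∀ a ∈ A, a ∈ upB (blocker A) := by
      intro a ha
      rw [mem_upB_blocker]
      intro u hu
      obtain ⟨l, h3, h4, h5⟩ := hu a ha
      exact ⟨l, h3, h5, h4⟩
    ext z
    constructor
    · intro hz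
      obtain ⟨a, ha, haz⟩ := key z hz.1
      exact hz.2 a (sub a ha) haz ▸ ha
    · intro hz
      refine ⟨sub z hz, fun y hy hyz => ?_⟩
      obtain ⟨a, ha, hay⟩ := key y hy
      have : a = z := hA.eq ha hz (hay.trans hyz)
      exact le_antisymm hyz (this ▸ hay)
end

section
/- Let P be a finite bounded poset such that A** = A for all antichains A in P. Then P is isomorphic (as a poset) to a well-complemented subposet of a Boolean lattice; concretely, the map x ↦ Λ(x) is a poset isomorphism from P onto its image in the Boolean lattice of all subsets of Λ, and this image contains the empty set and all singletons and is closed under complementation in Λ. -/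
/-- Below every element blocking `A` there is a member of the blocker of `A`. -/
theorem exists_mem_blocker_le {P : Type*} [PartialOrder P] [OrderBot P] [Finite P] (A : Set P)
    (x : P) (hx : ∀ a ∈ A, ∃ l : P, IsAtom l ∧ l ≤ x ∧ l ≤ a) :
    ∃ z ∈ blocker A, z ≤ x := by
  obtain ⟨z, hzx, hz⟩ := Set.Finite.exists_le_minimal
    (Set.toFinite {y : P | ∀ a ∈ A, ∃ l : P, IsAtom l ∧ l ≤ y ∧ l ≤ a}) hx
  exact ⟨z, ⟨hz.1, fun y hy hyz => le_antisymm hyz (hz.2 hy hyz)⟩, hzx⟩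

/-- The blocker of a single element is the set of atoms below it. -/
theorem mem_atoms_of_mem_blocker_singleton {P : Type*} [PartialOrder P] [OrderBot P] (x y : P)
    (hy : y ∈ blocker ({x} : Set P)) : IsAtom y ∧ y ≤ x := by
  obtain ⟨h1, h2⟩ := hy
  obtain ⟨l, hl, hly, hlx⟩ := h1 x rfl
  have := h2 l (by rintro a rfl; exact ⟨l, hl, le_rfl, hlx⟩) hly
  subst this
  exact ⟨hl, hlx⟩

/-- Inclusion of atom sets implies comparability. -/
theorem le_of_atoms_subset {P : Type*} [PartialOrder P] [BoundedOrder P] [Finite P]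
    (h : ∀ A : Set P, IsAnti A → blocker (blocker A) = A) (x y : P)
    (hxy : ∀ l : P, IsAtom l → l ≤ x → l ≤ y) : x ≤ y := by
  by_cases hx : x = ⊥
  · simp [hx]
  have hA := h {x} ⟨⟨x, rfl⟩, fun hb => hx hb.symm, IsAntichain.singleton⟩
  obtain ⟨z, hz, hzy⟩ := exists_mem_blocker_le (blocker ({x} : Set P)) y (by
    intro a ha
    obtain ⟨h1, h2⟩ := mem_atoms_of_mem_blocker_singleton x a ha
    exact ⟨a, h1, hxy a h1 h2, le_rfl⟩)
  rw [hA] at hz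
  obtain rfl : z = x := hz
  exact hzy

/-- Theorem 2.4, (1) ⇒ (2): if a finite bounded poset `P` satisfies `A** = A` for all
antichains, then `x ↦ Λ(x)` is a poset isomorphism from `P` onto its image in the
Boolean lattice of subsets of the set `Λ` of atoms, and this image contains `∅` and
all singletons and is closed under complementation; i.e. `P` is isomorphic to a
well-complemented subposet of a Boolean lattice. -/
theorem strong_blocker_duality_wellComplemented {P : Type*}
    [PartialOrder P] [BoundedOrder P] [Fintype P]
    (h : ∀ A : Set P, IsAnti A → blocker (blocker A) = A) :
    (∀ x y : P, x ≤ y ↔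
        {l : {a : P // IsAtom a} | (l : P) ≤ x} ⊆ {l : {a : P // IsAtom a} | (l : P) ≤ y}) ∧
      (∃ x : P, {l : {a : P // IsAtom a} | (l : P) ≤ x} = ∅) ∧
      (∀ l₀ : {a : P // IsAtom a}, ∃ x : P, {l : {a : P // IsAtom a} | (l : P) ≤ x} = {l₀}) ∧
      (∀ x : P, ∃ y : P,
        {l : {a : P // IsAtom a} | (l : P) ≤ y} = {l : {a : P // IsAtom a} | (l : P) ≤ x}ᶜ) := by
  refine ⟨fun x y => ⟨fun hxy l hl => le_trans hl hxy, fun hs =>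
    le_of_atoms_subset h x y fun l hl hlx => hs (a := ⟨l, hl⟩) hlx⟩, ⟨⊥, ?_⟩, ?_, ?_⟩
  · ext l
    simpa using l.2.1
  · intro l₀
    refine ⟨l₀, ?_⟩
    ext l
    simp only [Set.mem_setOf_eq, Set.mem_singleton_iff]
    refine ⟨fun hl => Subtype.ext ?_, fun hl => by rw [hl]⟩
    exact (l₀.2.le_iff.1 hl).resolve_left l.2.1
  · intro x
    by_cases hne : ∃ a : P, IsAtom a ∧ ¬ a ≤ x
    · have hA := h {a | IsAtom a ∧ ¬ a ≤ x} ⟨hne, fun hb => hb.1.1 rfl, by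
        intro a ha b hb hab hle
        exact hab ((hb.1.le_iff.1 hle).resolve_left ha.1.1)⟩
      by_contra hcon
      obtain ⟨z, hz, hzx⟩ := exists_mem_blocker_le (blocker {a | IsAtom a ∧ ¬ a ≤ x}) x (by
        intro y hy
        by_contra hno
        refine hcon ⟨y, ?_⟩
        ext l
        simp only [Set.mem_setOf_eq, Set.mem_compl_iff]
        refine ⟨fun hly hlx => hno ⟨l, l.2, hlx, hly⟩, fun hlx => ?_⟩
        obtain ⟨m, hm, hmy, hml⟩ := hy.1 l ⟨l.2, hlx⟩
        rwa [← (l.2.le_iff.1 hml).resolve_left hm.1])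
      rw [hA] at hz
      exact hz.2 hzx
    · push Not at hne
      refine ⟨⊥, ?_⟩
      ext l
      simp only [Set.mem_setOf_eq, Set.mem_compl_iff, le_bot_iff]
      exact ⟨fun hl => absurd hl l.2.1, fun hl => absurd (hne l l.2) hl⟩
end

section
/- Let P be a finite bounded poset such that A** = A for all antichains A in P. Then P admits a fixed-point-free, order-reversing bijection of order 2 onto itself; in particular, P is isomorphic to its order dual. -/
section BlockerAux
variable {P : Type*} [PartialOrder P] [BoundedOrder P]

/-- `x` and `y` have a common atom. -/
def Meets (x y : P) : Prop := ∃ l : P, IsAtom l ∧ l ≤ x ∧ l ≤ y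

/-- elements meeting every member of `U`. -/
def starSet (U : Set P) : Set P := {y | ∀ a ∈ U, Meets y a}

/-- minimal elements. -/
def minSet (U : Set P) : Set P := {x | x ∈ U ∧ ∀ y : P, y ∈ U → y ≤ x → y = x}

theorem blocker_eq (A : Set P) : blocker A = minSet (starSet A) := rfl

theorem Meets.symm {x y : P} (hm : Meets x y) : Meets y x := by
  obtain ⟨l, h1, h2, h3⟩ := hm
  exact ⟨l, h1, h3, h2⟩

theorem Meets.mono {x y z : P} (hm : Meets x y) (hz : x ≤ z) : Meets z y := by
  obtain ⟨l, h1, h2, h3⟩ := hm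
  exact ⟨l, h1, h2.trans hz, h3⟩

theorem not_meets_bot (x : P) : ¬ Meets x ⊥ := by
  rintro ⟨l, h1, _, h3⟩
  exact h1.1 (le_bot_iff.1 h3)

theorem meets_of_le [Finite P] {x y : P} (hx : x ≠ ⊥) (hxy : x ≤ y) : Meets x y := by
  rcases IsAtomic.eq_bot_or_exists_atom_le x with h0 | ⟨l, h1, h2⟩
  · exact absurd h0 hx
  · exact ⟨l, h1, h2, h2.trans hxy⟩

theorem exists_minSet_le [Finite P] {U : Set P} {x : P} (hx : x ∈ U) :
    ∃ m ∈ minSet U, m ≤ x := by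
  obtain ⟨m, hm, hmin⟩ := (Set.toFinite U).exists_le_minimal hx
  exact ⟨m, ⟨hmin.1, fun y hy hym => le_antisymm hym (hmin.2 hy hym)⟩, hm⟩

theorem star_minSet [Finite P] (U : Set P) : starSet (minSet U) = starSet U := by
  ext y
  constructor
  · intro hy a ha
    obtain ⟨m, hm, hma⟩ := exists_minSet_le ha
    exact ((hy m hm).symm.mono hma).symm
  · intro hy a ha
    exact hy a ha.1

theorem star_upper (U : Set P) : IsUpperSet (starSet U) :=
  fun _ _ hab ha c hc => (ha c hc).mono hab

theorem eq_of_minSet_eq [Finite P] {U V : Set P} (hU : IsUpperSet U) (hV : IsUpperSet V)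
    (he : minSet U = minSet V) : U = V := by
  ext x
  constructor
  · intro hx
    obtain ⟨m, hm, hmx⟩ := exists_minSet_le hx
    rw [he] at hm
    exact hV hmx hm.1
  · intro hx
    obtain ⟨m, hm, hmx⟩ := exists_minSet_le hx
    rw [← he] at hm
    exact hU hmx hm.1

theorem starSet_starSet [Finite P] (h : ∀ A : Set P, IsAnti A → blocker (blocker A) = A)
    {U : Set P} (hU : IsUpperSet U) (hne : U.Nonempty) (hb : ⊥ ∉ U) :
    starSet (starSet U) = U := by
  apply eq_of_minSet_eq (star_upper _) hU
  have := h (minSet U) ⟨?_, fun hh => hb hh.1, ?_⟩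
  · rw [blocker_eq, blocker_eq, star_minSet, star_minSet] at this
    exact this
  · obtain ⟨x, hx⟩ := hne
    obtain ⟨m, hm, _⟩ := exists_minSet_le hx
    exact ⟨m, hm⟩
  · intro a ha b hb' hab hle
    exact hab (hb'.2 a ha.1 hle)

theorem star_Ici (x : P) : starSet (Set.Ici x) = {y | Meets y x} := by
  ext y
  constructor
  · intro hy
    exact hy x (le_refl x)
  · intro hy a ha
    exact (Meets.mono (Meets.symm hy) ha).symm

theorem star_star_Ici [Finite P] (h : ∀ A : Set P, IsAnti A → blocker (blocker A) = A)
    {x : P} (hx : x ≠ ⊥) : starSet {y | Meets y x} = Set.Ici x := by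
  rw [← star_Ici]
  exact starSet_starSet h (isUpperSet_Ici x) ⟨x, le_refl x⟩ (fun hh => hx (le_bot_iff.1 hh))

theorem exists_psi [Finite P] (h : ∀ A : Set P, IsAnti A → blocker (blocker A) = A)
    (x : P) : ∃ m : P, ∀ y, y ≤ m ↔ ¬ Meets y x := by
  by_cases hx : x = ⊥
  · subst hx
    exact ⟨⊤, fun y => ⟨fun _ => not_meets_bot y, fun _ => le_top⟩⟩
  set W : Set P := {w | ∃ m, ¬ Meets m x ∧ w ∈ starSet {z | ¬ z ≤ m}} with hW
  have hntop : ∀ m, ¬ Meets m x → ¬ (⊤ : P) ≤ m := by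
    intro m hm ht
    exact hm (((meets_of_le hx le_top).symm).mono ht)
  have hV : ∀ m, ¬ Meets m x → starSet (starSet {z | ¬ z ≤ m}) = {z | ¬ z ≤ m} := by
    intro m hm
    apply starSet_starSet h
    · intro a b hab ha hb
      exact ha (hab.trans hb)
    · exact ⟨⊤, hntop m hm⟩
    · simp
  have hstar : starSet W = {y | Meets y x} := by
    ext y
    constructor
    · intro hy
      by_contra hn
      have h1 : y ∈ starSet (starSet {z | ¬ z ≤ y}) := fun a ha => hy a ⟨y, hn, ha⟩
      rw [hV y hn] at h1
      exact h1 le_rfl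
    · rintro hy a ⟨m, hm, ha⟩
      exact (ha y (fun hle => hm (Meets.mono hy hle))).symm
  have hWW : starSet (starSet W) = W := by
    apply starSet_starSet h
    · rintro a b hab ⟨m, hm, ha⟩
      exact ⟨m, hm, star_upper _ hab ha⟩
    · refine ⟨⊤, ⊥, fun hh => not_meets_bot x hh.symm, fun a ha => ?_⟩
      exact (meets_of_le (fun hh => ha hh.le) le_top).symm
    · rintro ⟨m, hm, ha⟩
      exact not_meets_bot _ (ha ⊤ (hntop m hm)).symm
  rw [hstar, star_star_Ici h hx] at hWW
  have hxW : x ∈ W := hWW ▸ (le_refl x : x ∈ Set.Ici x)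
  obtain ⟨m, hm, hxm⟩ := hxW
  refine ⟨m, fun y => ⟨fun hle hy => hm (hy.mono hle), fun hn => ?_⟩⟩
  by_contra hle
  exact hn (hxm y hle).symm

end BlockerAux

/-- Corollary 2.5: if a (nontrivial) finite bounded poset satisfies `A** = A` for all
antichains `A`, then it admits a fixed-point-free order-reversing bijection of order 2
onto itself; in particular it is isomorphic to its order dual. -/
theorem strong_blocker_duality_self_dual {P : Type*}
    [PartialOrder P] [BoundedOrder P] [Fintype P] [Nontrivial P]
    (h : ∀ A : Set P, IsAnti A → blocker (blocker A) = A) :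
    (∃ φ : P → P, Function.Bijective φ ∧ (∀ x y : P, x ≤ y → φ y ≤ φ x) ∧
        (∀ x : P, φ x ≠ x) ∧ (∀ x : P, φ (φ x) = x)) ∧
      Nonempty (P ≃o Pᵒᵈ) := by
  choose φ hφ using exists_psi h
  have hsymm : ∀ x y, y ≤ φ x → x ≤ φ y := fun x y hy =>
    (hφ y x).2 (fun hm => (hφ x y).1 hy hm.symm)
  have hanti : ∀ x y : P, x ≤ y → φ y ≤ φ x := fun x y hxy =>
    hsymm _ _ (hxy.trans (hsymm _ _ le_rfl))
  have hinj : Function.Injective φ := by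
    intro x y hxy
    have hM : ∀ z, Meets z x ↔ Meets z y := fun z => by
      rw [← not_iff_not, ← hφ, ← hφ, hxy]
    have hb : ∀ x y : P, (∀ z, Meets z x ↔ Meets z y) → x ≠ ⊥ → y ≠ ⊥ := by
      rintro x y hM hx rfl
      exact not_meets_bot x ((hM x).1 (meets_of_le hx le_rfl))
    by_cases hx : x = ⊥
    · by_contra hne
      exact hb y x (fun z => (hM z).symm) (fun hy => hne (hx.trans hy.symm)) hx
    · have hy := hb x y hM hx
      have h1 := star_star_Ici h hx
      have h2 := star_star_Ici h hy
      have h3 : {z | Meets z x} = {z | Meets z y} := Set.ext hM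
      rw [h3, h2] at h1
      exact (Set.Ici_injective h1).symm
  have hinv : ∀ x, φ (φ x) = x := fun x => hinj
    (le_antisymm (hanti _ _ (hsymm _ _ le_rfl)) (hsymm _ _ le_rfl))
  refine ⟨⟨φ, Function.Involutive.bijective hinv, hanti, ?_, hinv⟩, ?_⟩
  · intro x hx
    have h0 : x = ⊥ := by
      by_contra hne
      exact (hφ x x).1 hx.ge (meets_of_le hne le_rfl)
    have h1 : (⊤ : P) ≤ φ ⊥ := (hφ ⊥ ⊤).2 (not_meets_bot ⊤)
    subst h0
    rw [hx] at h1
    exact bot_ne_top (le_bot_iff.1 h1).symm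
  · refine ⟨⟨⟨fun x => OrderDual.toDual (φ x), fun x => φ (OrderDual.ofDual x), hinv, hinv⟩, ?_⟩⟩
    intro a b
    refine ⟨fun hab => ?_, fun hab => hanti a b hab⟩
    have := hanti _ _ (show φ b ≤ φ a from hab)
    rwa [hinv, hinv] at this
end

section
/- Let L be a finite lattice. Then A** = A holds for all antichains A in L if and only if L is isomorphic to a Boolean lattice 2^V for some finite set V. -/
theorem blocker_singleton_aux {L : Type*} [PartialOrder L] [OrderBot L] (x : L) :
    blocker ({x} : Set L) = {l | IsAtom l ∧ l ≤ x} := by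
  ext y
  constructor
  · rintro ⟨h1, h2⟩
    obtain ⟨l, hl, hy, hx⟩ := h1 x rfl
    have : l = y := h2 l (by rintro a rfl; exact ⟨l, hl, le_rfl, hx⟩) hy
    subst this
    exact ⟨hl, hx⟩
  · rintro ⟨hl, hx⟩
    refine ⟨by rintro a rfl; exact ⟨y, hl, le_rfl, hx⟩, ?_⟩
    intro z hz hzy
    obtain ⟨l, hl', hlz, -⟩ := hz x rfl
    rcases hl.le_iff.1 hzy with h | h
    · subst h
      exact absurd (le_bot_iff.1 hlz) hl'.1
    · exact h

theorem blocker_atoms_aux {L : Type*} [PartialOrder L] [OrderBot L] (S : Set L)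
    (hS : ∀ l ∈ S, IsAtom l) (x : L) (hx : IsLUB S x) : blocker S = {x} := by
  have key : ∀ y : L, (∀ a ∈ S, ∃ l : L, IsAtom l ∧ l ≤ y ∧ l ≤ a) ↔ x ≤ y := by
    intro y
    constructor
    · intro h
      refine hx.2 ?_
      intro a ha
      obtain ⟨l, hl, hly, hla⟩ := h a ha
      rcases (hS a ha).le_iff.1 hla with h | h
      · exact absurd h hl.1
      · exact h ▸ hly
    · intro h a ha
      exact ⟨a, hS a ha, (hx.1 ha).trans h, le_rfl⟩
  ext y
  simp only [blocker, key, Set.mem_ofPred_eq, Set.mem_singleton_iff]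
  constructor
  · rintro ⟨h1, h2⟩
    exact (h2 x le_rfl h1).symm
  · rintro rfl
    exact ⟨le_rfl, fun z h1 h2 => le_antisymm h2 h1⟩

theorem exists_lub_aux {L : Type*} [Lattice L] [BoundedOrder L] [Fintype L] (S : Set L) :
    ∃ x, IsLUB S x := by
  classical
  refine ⟨(Set.toFinite S).toFinset.sup id, ?_, ?_⟩
  · intro a ha
    exact Finset.le_sup (f := id) (by simpa using ha)
  · intro b hb
    refine Finset.sup_le ?_
    intro a ha
    exact hb (by simpa using ha)

/-- Corollary 2.6: a finite lattice satisfies `A** = A` for all antichains `A` if and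
only if it is Boolean, i.e. isomorphic to the lattice of all subsets of a finite set. -/
theorem lattice_strong_blocker_duality_iff_boolean {L : Type*}
    [Lattice L] [BoundedOrder L] [Fintype L] :
    (∀ A : Set L, IsAnti A → blocker (blocker A) = A) ↔
      ∃ m : ℕ, Nonempty (L ≃o Set (Fin m)) := by
  constructor
  · intro H
    have hsub : ∀ S : Set L, (∀ l ∈ S, IsAtom l) → ∀ x, IsLUB S x →
        {l | IsAtom l ∧ l ≤ x} = S := by
      intro S hS x hx
      rcases S.eq_empty_or_nonempty with rfl | hne
      · have : x = ⊥ := by simpa using hx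
        subst this
        ext l
        simp only [Set.mem_ofPred_eq, Set.mem_empty_iff_false, iff_false]
        rintro ⟨h1, h2⟩
        exact h1.1 (le_bot_iff.1 h2)
      · have := H S ⟨hne, fun h => (hS _ h).1 rfl, by
          intro a ha b hb hab hle
          rcases (hS b hb).le_iff.1 hle with h | h
          · exact (hS a ha).1 h
          · exact hab h⟩
        rwa [blocker_atoms_aux S hS x hx, blocker_singleton_aux] at this
    have hat : ∀ x : L, IsLUB {l | IsAtom l ∧ l ≤ x} x := by
      intro x
      obtain ⟨y, hy⟩ := exists_lub_aux {l | IsAtom l ∧ l ≤ x}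
      by_cases hx : x = ⊥
      · subst hx
        exact ⟨fun l hl => hl.2, fun _ _ => bot_le⟩
      · have := H {x} ⟨⟨x, rfl⟩, fun h => hx h.symm, by simp⟩
        rw [blocker_singleton_aux, blocker_atoms_aux _ (fun l hl => hl.1) y hy] at this
        have hxy : y = x := by simpa using this
        rwa [hxy] at hy
    classical
    let T := {l : L // IsAtom l}
    let f : L → Set T := fun x => {t | t.1 ≤ x}
    have hf : ∀ x y, f x ≤ f y ↔ x ≤ y := by
      intro x y
      constructor
      · intro h
        exact (hat x).2 fun l hl => h (show (⟨l, hl.1⟩ : T) ∈ f x from hl.2)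
      · intro h t ht
        exact le_trans (show t.1 ≤ x from ht) h
    have hsurj : Function.Surjective f := by
      intro S
      obtain ⟨x, hx⟩ := exists_lub_aux (Subtype.val '' S)
      refine ⟨x, ?_⟩
      have h := hsub (Subtype.val '' S) (by rintro _ ⟨t, -, rfl⟩; exact t.2) x hx
      ext t
      have h2 : t.1 ∈ {l | IsAtom l ∧ l ≤ x} ↔ t.1 ∈ Subtype.val '' S := by rw [h]
      constructor
      · intro ht
        obtain ⟨u, hu, hut⟩ := h2.1 ⟨t.2, ht⟩
        rwa [← Subtype.ext hut]
      · intro ht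
        exact (h2.2 ⟨t, ht, rfl⟩).2
    let e : L ↪o Set T := OrderEmbedding.ofMapLEIff f hf
    obtain ⟨m, ⟨g⟩⟩ := Finite.exists_equiv_fin T
    refine ⟨m, ⟨(RelIso.ofSurjective e hsurj).trans g.toOrderIsoSet⟩⟩
  · rintro ⟨m, ⟨e⟩⟩ A ⟨-, -, hA⟩
    have key : ∀ x : L, (∀ b ∈ blocker A, ∃ l : L, IsAtom l ∧ l ≤ x ∧ l ≤ b) ↔
        ∃ a ∈ A, a ≤ x := by
      intro x
      constructor
      · intro h
        by_contra! hcon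
        have hc : ∀ a ∈ A, ∃ l : L, IsAtom l ∧ l ≤ e.symm (e x)ᶜ ∧ l ≤ a := by
          intro a ha
          have h1 : ¬ e a ⊆ e x := fun h => hcon a ha (e.le_iff_le.1 h)
          obtain ⟨i, hia, hix⟩ := Set.not_subset.1 h1
          refine ⟨e.symm {i}, (e.symm.isAtom_iff _).2 (Set.isAtom_singleton i), ?_, ?_⟩
          · exact e.symm.monotone (by simpa using hix)
          · rw [e.symm_apply_le]
            simpa using hia
        obtain ⟨b, hbc, hb⟩ := (Set.toFinite
          {y : L | ∀ a ∈ A, ∃ l : L, IsAtom l ∧ l ≤ y ∧ l ≤ a}).exists_le_minimal hc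
        obtain ⟨l, hl, hlx, hlb⟩ := h b
          ⟨hb.1, fun y hy hyb => le_antisymm hyb (hb.2 hy hyb)⟩
        have h1 : e l ≤ e x := e.monotone hlx
        have h2 : e l ≤ (e x)ᶜ := e.le_symm_apply.1 (hlb.trans hbc)
        have h3 : e l ≤ ⊥ := by
          intro i hi
          exact h2 hi (h1 hi)
        apply hl.1
        rw [le_bot_iff] at h3
        exact e.injective (h3.trans e.map_bot.symm)
      · rintro ⟨a, ha, hax⟩ b hb
        obtain ⟨l, hl, hlb, hla⟩ := hb.1 a ha
        exact ⟨l, hl, hla.trans hax, hlb⟩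
    ext x
    rw [blocker]
    simp only [key, Set.mem_ofPred_eq]
    constructor
    · rintro ⟨⟨a, ha, hax⟩, h⟩
      rw [← h a ⟨a, ha, le_rfl⟩ hax]
      exact ha
    · intro hx
      refine ⟨⟨x, hx, le_rfl⟩, ?_⟩
      rintro y ⟨a, ha, hay⟩ hyx
      have := hA.eq ha hx (hay.trans hyx)
      subst this
      exact le_antisymm hyx hay
end

section
/- Let A ⊆ P_n be an antichain in the refinement order Ref(n) on number partitions of n. Then in the partition lattice Π_n one has fi(A)* = fi(B), where B is the set of refinement-minimal elements of P_n \ (⋃_{λ ∈ A} { μ ∈ P_n : μ ≤ λ' in dominance order }); i.e. B consists of the refinement-minimal number partitions among those not dominated by any conjugate λ' with λ ∈ A. -/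
open Finset

/-- The partition lattice `Π_n`: set partitions of `{1,…,n}`, ordered by refinement. -/
abbrev SetPart (n : ℕ) := Finpartition (univ : Finset (Fin n))

/-- The shape of a set partition: the number partition formed by its block sizes. -/
def shape {n : ℕ} (σ : SetPart n) : Nat.Partition n where
  parts := σ.parts.val.map Finset.card
  parts_pos := by
    intro i hi
    simp only [Multiset.mem_map, Finset.mem_val] at hi
    obtain ⟨p, hp, rfl⟩ := hi
    exact Finset.card_pos.mpr (σ.nonempty_of_mem_parts hp)
  parts_sum := by
    have h := σ.sum_card_parts
    rw [Finset.sum] at h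
    rw [h, card_univ, Fintype.card_fin]

/-- The fiber under the shape map of a set `S` of number partitions: all set
partitions whose shape lies in `S`. -/
def fi {n : ℕ} (S : Set (Nat.Partition n)) : Set (SetPart n) :=
  {σ | shape σ ∈ S}

/-- The sum of the `k` largest parts of a number partition. -/
def topSum {n : ℕ} (μ : Nat.Partition n) (k : ℕ) : ℕ :=
  (((μ.parts.sort (· ≤ ·)).reverse).take k).sum

/-- The `i+1`-st part of the conjugate (transpose) partition `λ'` of `λ`:
the number of parts of `λ` that are at least `i+1`. -/
def conjPart {n : ℕ} (lam : Nat.Partition n) (i : ℕ) : ℕ :=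
  (lam.parts.filter (fun p => i + 1 ≤ p)).card

/-- `μ ≤ λ'` in the dominance order `Dom(n)`, where `λ'` is the conjugate of `λ`:
for every `k`, the sum of the `k` largest parts of `μ` is at most
`λ'_1 + ⋯ + λ'_k` (the parts of the conjugate being arranged decreasingly). -/
def DomLEConj {n : ℕ} (μ lam : Nat.Partition n) : Prop :=
  ∀ k, topSum μ k ≤ ∑ i ∈ Finset.range k, conjPart lam i

/-- The refinement order `Ref(n)` on partitions of `n`: `μ ≤ ν` iff `μ` can be
obtained from `ν` by partitioning the parts of `ν`. -/
def RefLE {n : ℕ} (μ ν : Nat.Partition n) : Prop :=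
  ∃ g : Multiset (Multiset ℕ), g.map Multiset.sum = ν.parts ∧ g.sum = μ.parts

/-- The partition of `n` into `n` parts equal to `1`; this is the bottom element of
both the refinement order and the dominance order on partitions of `n`. -/
def onesPart (n : ℕ) : Nat.Partition n where
  parts := Multiset.replicate n 1
  parts_pos := by
    intro i hi
    rw [Multiset.eq_of_mem_replicate hi]
    exact one_pos
  parts_sum := by simp

/-- Gale–Ryser core: repeatedly move a unit from a surplus row to a deficient row. -/
theorem gr_core {J : Type*} [Fintype J] [DecidableEq J] (n : ℕ) (m : ℕ → ℕ) (hm : Antitone m) :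
    ∀ (d : ℕ) (S : J → Finset ℕ), (∀ j, S j ⊆ range n) →
      (∀ k, ∑ i ∈ range k, m i ≤ ∑ i ∈ range k, #{j | i ∈ S j}) →
      (∑ i ∈ range n, m i = ∑ i ∈ range n, #{j | i ∈ S j}) →
      (∑ k ∈ range n, ∑ i ∈ range k, #{j | i ∈ S j} ≤ d) →
      ∃ T : J → Finset ℕ, (∀ j, T j ⊆ range n) ∧ (∀ j, #(T j) = #(S j)) ∧
        ∀ i < n, #{j | i ∈ T j} = m i := by
  intro d
  induction d with
  | zero =>
    intro S hS hdom htot hd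
    refine ⟨S, hS, fun _ => rfl, ?_⟩
    have h0 : ∀ k < n, ∑ i ∈ range k, #{j | i ∈ S j} = 0 := by
      intro k hk
      have := Finset.single_le_sum (f := fun k => ∑ i ∈ range k, #{j | i ∈ S j})
        (fun _ _ => Nat.zero_le _) (mem_range.2 hk)
      omega
    intro i hi
    have h1 := h0 i hi
    have h2 := hdom i
    by_cases h : i + 1 < n
    · have h3 := h0 _ h
      have h4 := hdom (i+1)
      simp only [sum_range_succ] at h3 h4
      omega
    · obtain rfl : n = i + 1 := by omega
      rw [sum_range_succ, sum_range_succ] at htot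
      omega
  | succ d ih =>
    intro S hS hdom htot hd
    set r : ℕ → ℕ := fun i => #{j | i ∈ S j} with hr
    by_cases hall : ∀ i < n, r i = m i
    · exact ⟨S, hS, fun _ => rfl, hall⟩
    push Not at hall
    -- first difference
    obtain ⟨p, ⟨hpn, hpne⟩, hpmin⟩ : ∃ p, (p < n ∧ r p ≠ m p) ∧ ∀ q < p, ¬ (q < n ∧ r q ≠ m q) :=
      ⟨Nat.find hall, Nat.find_spec hall, fun q hq => Nat.find_min hall hq⟩
    have hpre : ∑ i ∈ range p, m i = ∑ i ∈ range p, r i := by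
      apply sum_congr rfl
      intro q hq
      have := hpmin q (mem_range.1 hq)
      have := mem_range.1 hq
      by_contra hh
      exact hpmin q (mem_range.1 hq) ⟨by omega, fun h => hh h.symm⟩
    have hpgt : m p < r p := by
      have := hdom (p+1)
      rw [sum_range_succ, sum_range_succ] at this
      change _ ≤ ∑ i ∈ range p, r i + r p at this
      omega
    have hex : ∃ q, p < q ∧ q < n ∧ r q < m q := by
      by_contra hcon
      push Not at hcon
      have : ∑ i ∈ range n, m i < ∑ i ∈ range n, r i := by
        apply sum_lt_sum
        · intro q hq
          have hq := mem_range.1 hq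
          rcases lt_trichotomy q p with h | h | h
          · by_contra hh
            exact hpmin q h ⟨hq, by omega⟩
          · subst h; omega
          · exact hcon q h hq
        · exact ⟨p, mem_range.2 hpn, hpgt⟩
      exact absurd htot (by change _ ≠ ∑ i ∈ range n, r i; omega)
    obtain ⟨q, ⟨hpq, hqn, hqlt⟩, hqmin⟩ : ∃ q, (p < q ∧ q < n ∧ r q < m q) ∧
        ∀ t < q, ¬ (p < t ∧ t < n ∧ r t < m t) :=
      ⟨Nat.find hex, Nat.find_spec hex, fun q hq => Nat.find_min hex hq⟩
    have hstrict : ∀ k, p < k → k ≤ q → ∑ i ∈ range k, m i < ∑ i ∈ range k, r i := by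
      intro k hk hkq
      apply sum_lt_sum
      · intro t ht
        have ht := mem_range.1 ht
        rcases lt_trichotomy t p with h | h | h
        · by_contra hh
          exact hpmin t h ⟨by omega, by omega⟩
        · subst h; omega
        · by_contra hh
          exact hqmin t (by omega) ⟨h, by omega, by omega⟩
      · exact ⟨p, mem_range.2 hk, hpgt⟩
    have hrlt : r q < r p := by
      have := hm hpq.le
      omega
    obtain ⟨j₀, hj1, hj2⟩ : ∃ j, p ∈ S j ∧ q ∉ S j := by
      by_contra hcon
      push Not at hcon
      have : r p ≤ r q := card_le_card (fun j hj => by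
        simp only [mem_filter, mem_univ, true_and] at hj ⊢; exact hcon j hj)
      omega
    set S' : J → Finset ℕ := Function.update S j₀ (insert q ((S j₀).erase p)) with hS'
    have hmem : ∀ i j, i ∈ S' j ↔ if j = j₀ then (i = q ∨ (i ≠ p ∧ i ∈ S j)) else i ∈ S j := by
      intro i j
      by_cases h : j = j₀
      · subst h; simp [hS']
      · simp [hS', h]
    have hcard : ∀ j, #(S' j) = #(S j) := by
      intro j
      by_cases h : j = j₀
      · subst h
        simp only [hS', Function.update_self]
        rw [card_insert_of_notMem (by simp [hj2]), card_erase_of_mem hj1]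
        have : 0 < #(S j) := card_pos.2 ⟨p, hj1⟩
        omega
      · simp [hS', h]
    have hrp : #{j | p ∈ S' j} + 1 = r p := by
      have : ({j | p ∈ S' j} : Finset J) = ({j | p ∈ S j} : Finset J).erase j₀ := by
        ext j
        simp only [mem_filter, mem_univ, true_and, mem_erase, hmem]
        split_ifs with h <;> simp [h, hpq.ne]
      rw [this, card_erase_add_one (by simp [hj1])]
    have hrq : #{j | q ∈ S' j} = r q + 1 := by
      have : ({j | q ∈ S' j} : Finset J) = insert j₀ ({j | q ∈ S j} : Finset J) := by
        ext j
        simp only [mem_filter, mem_univ, true_and, mem_insert, hmem]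
        split_ifs with h <;> simp [h]
      rw [this, card_insert_of_notMem (by simp [hj2])]
    have hro : ∀ i, i ≠ p → i ≠ q → #{j | i ∈ S' j} = r i := by
      intro i h1 h2
      have : ({j | i ∈ S' j} : Finset J) = ({j | i ∈ S j} : Finset J) := by
        ext j
        simp only [mem_filter, mem_univ, true_and, hmem]
        split_ifs with h <;> simp [h1, h2]
      rw [this]
    have hsum : ∀ k, ∑ i ∈ range k, #{j | i ∈ S' j} + (if p < k ∧ k ≤ q then 1 else 0)
        = ∑ i ∈ range k, r i := by
      intro k
      induction k with
      | zero => simp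
      | succ k ihk =>
        rw [sum_range_succ, sum_range_succ, ← ihk]
        by_cases h1 : k = p
        · subst h1
          simp only [lt_irrefl, false_and, if_false, Nat.lt_succ_self, true_and]
          rw [if_pos (by omega)]; omega
        · by_cases h2 : k = q
          · subst h2
            rw [if_neg (by omega), if_pos (by omega)]; omega
          · rw [hro k h1 h2]
            by_cases h3 : p < k ∧ k ≤ q
            · rw [if_pos (by omega), if_pos h3]; omega
            · rw [if_neg (by omega), if_neg h3]; omega
    refine (ih S' ?_ ?_ ?_ ?_).imp fun T hT =>
      ⟨hT.1, fun j => (hT.2.1 j).trans (hcard j), hT.2.2⟩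
    · intro j i hi
      rw [hmem] at hi
      split_ifs at hi with h
      · rcases hi with h | h
        · subst h; exact mem_range.2 hqn
        · exact hS j h.2
      · exact hS j hi
    · intro k
      have h1 := hsum k
      have h2 : ∑ i ∈ range k, m i ≤ ∑ i ∈ range k, r i := hdom k
      split_ifs at h1 with h
      · have := hstrict k h.1 h.2
        omega
      · omega
    · have h1 := hsum n
      rw [if_neg (by omega)] at h1
      have : ∑ i ∈ range n, m i = ∑ i ∈ range n, r i := htot
      omega
    · have : ∑ k ∈ range n, ∑ i ∈ range k, #{j | i ∈ S' j} <
          ∑ k ∈ range n, ∑ i ∈ range k, r i := by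
        apply sum_lt_sum
        · intro k _
          have := hsum k
          omega
        · refine ⟨q, mem_range.2 hqn, ?_⟩
          have := hsum q
          rw [if_pos ⟨hpq, le_rfl⟩] at this
          omega
      have h2 : ∑ k ∈ range n, ∑ i ∈ range k, r i ≤ d + 1 := hd
      omega

/-- Blocks of a set partition listed by decreasing size. -/
theorem exists_block_list {n : ℕ} (σ : SetPart n) : ∃ l : List (Finset (Fin n)),
    l.Nodup ∧ (∀ b, b ∈ l ↔ b ∈ σ.parts) ∧
      ((shape σ).parts.sort (· ≤ ·)).reverse = l.map Finset.card := by
  classical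
  set r : Finset (Fin n) → Finset (Fin n) → Prop := fun a b => #b ≤ #a
  have : Std.Total r := ⟨fun a b => le_total _ _⟩
  have : IsTrans _ r := ⟨fun a b c h1 h2 => le_trans h2 h1⟩
  have hp := List.perm_insertionSort r σ.parts.toList
  refine ⟨σ.parts.toList.insertionSort r, ?_, ?_, ?_⟩
  · exact hp.nodup_iff.2 (Finset.nodup_toList _)
  · intro b; rw [hp.mem_iff, Finset.mem_toList]
  · have h1 : (((shape σ).parts.sort (· ≤ ·)).reverse).Perm
        ((σ.parts.toList.insertionSort r).map Finset.card) := by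
      refine (List.reverse_perm _).trans ?_
      rw [← Multiset.coe_eq_coe, Multiset.sort_eq]
      rw [Multiset.coe_eq_coe.2 (hp.map Finset.card)]
      simp [shape, ← Multiset.map_coe]
    refine h1.eq_of_pairwise' (r := fun a b : ℕ => b ≤ a) ?_ ?_
    · rw [List.pairwise_reverse]
      exact Multiset.pairwise_sort _ _
    · rw [List.pairwise_map]
      exact List.pairwise_insertionSort r _

theorem sum_take_getD (l : List ℕ) (k : ℕ) :
    (l.take k).sum = ∑ i ∈ range k, l.getD i 0 := by
  induction l generalizing k with
  | nil => simp
  | cons a l ih =>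
    cases k with
    | zero => simp
    | succ k => rw [sum_range_succ']; simp [ih, add_comm]

theorem sum_conjPart {n : ℕ} (lam : Nat.Partition n) (k : ℕ) :
    ∑ i ∈ range k, conjPart lam i = (lam.parts.map (fun p => min k p)).sum := by
  induction k with
  | zero => simp
  | succ k ih =>
    rw [sum_range_succ, ih, conjPart]
    generalize lam.parts = M
    induction M using Multiset.induction with
    | empty => simp
    | cons a M ihM =>
      simp only [Multiset.map_cons, Multiset.sum_cons, Multiset.filter_cons, Multiset.card_add]
      split_ifs with h
      · rw [Multiset.card_singleton]; have : min (k+1) a = min k a + 1 := by omega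
        omega
      · rw [Multiset.card_zero]; have : min (k+1) a = min k a := by omega
        omega

/-- Two partitions are crossing if blocks meet in at most one point. -/
def Crossing {n : ℕ} (x a : SetPart n) : Prop :=
  ∀ b ∈ x.parts, ∀ c ∈ a.parts, #(b ∩ c) ≤ 1

theorem dom_of_crossing {n : ℕ} (x a : SetPart n) (h : Crossing x a) :
    DomLEConj (shape x) (shape a) := by
  intro k
  obtain ⟨l, hnd, hmem, hl⟩ := exists_block_list x
  rw [sum_conjPart, topSum, hl, ← List.map_take]
  set T := (l.take k).toFinset with hT
  have hndT : (l.take k).Nodup := hnd.sublist (List.take_sublist _ _)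
  have hTx : ∀ b ∈ T, b ∈ x.parts := by
    intro b hb
    rw [hT, List.mem_toFinset] at hb
    exact (hmem b).1 (List.mem_of_mem_take hb)
  have hTk : #T ≤ k := by
    rw [hT, List.toFinset_card_of_nodup hndT]; simp
  have e1 : ((l.take k).map Finset.card).sum = ∑ b ∈ T, #b := by
    rw [hT, List.sum_toFinset _ hndT]
  have e2 : ((shape a).parts.map (fun p => min k p)).sum = ∑ c ∈ a.parts, min k #c := by
    simp [shape]
  rw [e1, e2]
  calc ∑ b ∈ T, #b = ∑ b ∈ T, ∑ c ∈ a.parts, #(b ∩ c) := by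
        apply sum_congr rfl
        intro b _
        rw [← Finset.card_biUnion]
        · congr 1
          rw [← Finset.inter_biUnion]
          have := a.biUnion_parts
          conv_lhs => rw [← inter_univ b, ← this]
          rfl
        · intro c hc d hd hcd
          exact (a.disjoint hc hd hcd).mono inter_subset_right inter_subset_right
    _ = ∑ c ∈ a.parts, ∑ b ∈ T, #(b ∩ c) := sum_comm
    _ ≤ ∑ c ∈ a.parts, min k #c := by
        apply sum_le_sum
        intro c hc
        apply le_min
        · calc ∑ b ∈ T, #(b ∩ c) ≤ ∑ b ∈ T, 1 := sum_le_sum fun b hb => h b (hTx b hb) c hc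
            _ ≤ k := by simpa using hTk
        · rw [← Finset.card_biUnion]
          · apply card_le_card
            intro v hv
            simp only [mem_biUnion, mem_inter] at hv
            obtain ⟨_, _, _, h⟩ := hv; exact h
          · intro b hb d hd hbd
            exact (x.disjoint (hTx b hb) (hTx d hd) hbd).mono inter_subset_left inter_subset_left

theorem crossing_of_dom {n : ℕ} (x : SetPart n) (lam : Nat.Partition n)
    (h : DomLEConj (shape x) lam) : ∃ a : SetPart n, shape a = lam ∧ Crossing x a := by
  classical
  obtain ⟨l, hnd, hmem, hl⟩ := exists_block_list x
  set L := lam.parts.toList with hL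
  have hLlam : (L : Multiset ℕ) = lam.parts := Multiset.coe_toList _
  let J := Fin L.length
  let c : J → ℕ := fun j => L.get j
  have hc : (univ : Finset J).val.map c = lam.parts := by
    rw [← hLlam]
    show Multiset.map c (Finset.univ : Finset (Fin L.length)).val = _
    rw [Fin.univ_val_map]
    rw [show List.ofFn c = L from List.ofFn_get L]
  have hcmem : ∀ j, c j ∈ lam.parts := fun j => by
    rw [← hc]; exact Multiset.mem_map_of_mem _ (mem_univ j)
  have hcpos : ∀ j, 0 < c j := fun j => lam.parts_pos (hcmem j)
  have hcle : ∀ j, c j ≤ n := fun j => by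
    rw [← lam.parts_sum]; exact Multiset.le_sum_of_mem (hcmem j)
  set m : ℕ → ℕ := fun i => (l.map Finset.card).getD i 0 with hm
  have hcard_n : l.length ≤ n := by
    have h1 : l.length = #x.parts := by
      rw [← List.toFinset_card_of_nodup hnd]; congr 1; ext b; simp [hmem]
    rw [h1]; simpa using x.card_parts_le_card
  have hmanti : Antitone m := by
    have hsort : (l.map Finset.card).Pairwise (fun a b => b ≤ a) := by
      rw [← hl, List.pairwise_reverse]; exact Multiset.pairwise_sort _ _
    intro i j hij
    simp only [hm]
    by_cases hj : j < (l.map Finset.card).length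
    · rw [List.getD_eq_getElem _ _ hj, List.getD_eq_getElem _ _ (by omega)]
      rcases hij.eq_or_lt with rfl | hlt
      · exact le_rfl
      · exact List.pairwise_iff_getElem.1 hsort i j _ _ hlt
    · rw [List.getD_eq_default _ _ (by omega)]; exact Nat.zero_le _
  have htop : ∀ k, topSum (shape x) k = ∑ i ∈ range k, m i := by
    intro k; rw [topSum, hl, sum_take_getD]
  have hconj : ∀ i, conjPart lam i = #{j : J | i ∈ range (c j)} := by
    intro i
    rw [conjPart, ← hc, Multiset.filter_map, Multiset.card_map]
    simp only [mem_range]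
    rfl
  have hmn : ∑ i ∈ range n, m i = n := by
    rw [← sum_take_getD, List.take_of_length_le (by simpa using hcard_n)]
    have h1 : (l.map Finset.card : Multiset ℕ) = (shape x).parts := by
      rw [← hl]; simp
    rw [← Multiset.sum_coe, h1, (shape x).parts_sum]
  have hrn : ∑ i ∈ range n, #{j : J | i ∈ range (c j)} = n := by
    rw [← sum_congr rfl fun i _ => hconj i, sum_conjPart]
    rw [Multiset.map_congr rfl (g := id)]
    · rw [Multiset.map_id, lam.parts_sum]
    · intro p hp
      have : p ≤ lam.parts.sum := Multiset.le_sum_of_mem hp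
      rw [lam.parts_sum] at this
      simpa using this
  obtain ⟨S, hS1, hS2, hS3⟩ := gr_core n m hmanti _ (fun j : J => range (c j))
    (fun j => range_subset_range.2 (hcle j))
    (fun k => by rw [← htop, ← sum_congr rfl fun i _ => hconj i]; exact h k)
    (hmn.trans hrn.symm) le_rfl
  -- the index of a block
  have hidx : ∀ b ∈ x.parts, #b = #{j : J | l.idxOf b ∈ S j} := by
    intro b hb
    have hlt : l.idxOf b < l.length := List.idxOf_lt_length_iff.2 ((hmem b).2 hb)
    rw [hS3 _ (by omega)]
    simp only [hm]
    rw [List.getD_eq_getElem _ _ (by simpa using hlt)]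
    simp
  have hg : ∀ b : Finset (Fin n), ∃ g : Fin n → J, b ∈ x.parts →
      Set.BijOn g b ({j : J | l.idxOf b ∈ S j} : Finset J) := by
    intro b
    by_cases hb : b ∈ x.parts
    · have e := Finset.equivOfCardEq (hidx b hb)
      obtain ⟨v, hv⟩ := x.nonempty_of_mem_parts hb
      refine ⟨fun w => if hw : w ∈ b then (e ⟨w, hw⟩).1 else (e ⟨v, hv⟩).1, fun _ => ⟨?_, ?_, ?_⟩⟩
      · intro w hw
        have hw : w ∈ b := hw
        simp only [hw, dif_pos]
        exact (e ⟨w, hw⟩).2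
      · intro w hw w' hw' heq
        have hw : w ∈ b := hw
        have hw' : w' ∈ b := hw'
        simp only [hw, hw', dif_pos] at heq
        simpa using e.injective (Subtype.ext heq)
      · intro j hj
        refine ⟨(e.symm ⟨j, hj⟩).1, (e.symm ⟨j, hj⟩).2, ?_⟩
        simp
    · rcases Nat.eq_zero_or_pos n with h0 | h0
      · subst h0
        exact ⟨fun v => v.elim0, fun h => absurd h hb⟩
      · have : 0 < L.length := by
          rw [List.length_pos_iff]
          intro h0'
          have := lam.parts_sum
          rw [← hLlam, h0'] at this
          simp at this; omega
        exact ⟨fun _ => ⟨0, this⟩, fun h => absurd h hb⟩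
  choose g hg using hg
  let f : Fin n → J := fun v => g (x.part v) v
  have hf : ∀ b ∈ x.parts, ∀ v ∈ b, f v = g b v := by
    intro b hb v hv
    simp only [f, x.part_eq_of_mem hb hv]
  let F : J → Finset (Fin n) := fun j => {v | f v = j}
  have hSl : ∀ j, ∀ i ∈ S j, i < l.length := by
    intro j i hi
    by_contra hcon
    have h1 := hS3 i (mem_range.1 (hS1 j hi))
    simp only [hm] at h1
    rw [List.getD_eq_default _ _ (by simpa using hcon), card_eq_zero] at h1
    have : j ∈ ({j | i ∈ S j} : Finset J) := by simpa using hi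
    rw [h1] at this
    simp at this
  have hFcard : ∀ j, #(F j) = c j := by
    intro j
    rw [← card_range (c j), ← hS2 j]
    refine Finset.card_bij (fun v _ => l.idxOf (x.part v)) ?_ ?_ ?_
    · intro v hv
      have hb : x.part v ∈ x.parts := x.part_mem.2 (mem_univ v)
      have h1 := (hg _ hb).mapsTo (x.mem_part_self.2 (mem_univ v))
      have hv : f v = j := by simpa [F] using hv
      change f v ∈ _ at h1
      rw [hv] at h1
      simpa using h1
    · intro v hv w hw heq
      have hv : f v = j := by simpa [F] using hv
      have hw : f w = j := by simpa [F] using hw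
      have hbv : x.part v ∈ x.parts := x.part_mem.2 (mem_univ v)
      have heq' : x.part v = x.part w := (List.idxOf_inj ((hmem _).2 hbv)).1 heq
      refine (hg _ hbv).injOn (x.mem_part_self.2 (mem_univ v)) ?_ ?_
      · rw [heq']; exact x.mem_part_self.2 (mem_univ w)
      · change f v = _
        rw [heq', hv, ← hw]
    · intro i hi
      have hil := hSl j i hi
      have hb : l[i] ∈ x.parts := (hmem _).1 (List.getElem_mem hil)
      have hid : l.idxOf l[i] = i := hnd.idxOf_getElem i hil
      obtain ⟨v, hv, hgv⟩ := (hg _ hb).surjOn (show j ∈ _ by simpa [hid] using hi)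
      refine ⟨v, ?_, ?_⟩
      · simp only [F, mem_filter, mem_univ, true_and]
        rw [hf _ hb v hv, hgv]
      · rw [x.part_eq_of_mem hb hv, hid]
  have hFinj : Function.Injective F := by
    intro j j' hjj
    obtain ⟨v, hv⟩ : (F j).Nonempty := card_pos.1 (by rw [hFcard]; exact hcpos j)
    have h1 : f v = j := by simpa [F] using hv
    rw [hjj] at hv
    have h2 : f v = j' := by simpa [F] using hv
    rw [← h1, h2]
  let a : SetPart n := Finpartition.ofExistsUnique (univ.image F) (fun _ _ => subset_univ _)
    (by
      intro v _
      refine ⟨F (f v), ⟨mem_image_of_mem _ (mem_univ _), by simp [F]⟩, ?_⟩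
      rintro t ⟨ht, hv⟩
      obtain ⟨j, _, rfl⟩ := mem_image.1 ht
      have : f v = j := by simpa [F] using hv
      rw [this])
    (by
      intro h0
      obtain ⟨j, _, hj⟩ := mem_image.1 h0
      have := hFcard j
      rw [hj, card_empty] at this
      have := hcpos j
      omega)
  have haparts : a.parts = univ.image F := rfl
  refine ⟨a, ?_, ?_⟩
  · apply Nat.Partition.ext
    change a.parts.val.map Finset.card = _
    rw [haparts, Finset.image_val_of_injOn hFinj.injOn, Multiset.map_map, ← hc]
    exact Multiset.map_congr rfl fun j _ => hFcard j
  · intro b hb t ht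
    rw [haparts] at ht
    obtain ⟨j, _, rfl⟩ := mem_image.1 ht
    rw [card_le_one]
    intro v hv w hw
    rw [mem_inter] at hv hw
    have h1 : f v = j := by simpa [F] using hv.2
    have h2 : f w = j := by simpa [F] using hw.2
    rw [hf b hb _ hv.1] at h1
    rw [hf b hb _ hw.1] at h2
    exact (hg b hb).injOn hv.1 hw.1 (h1.trans h2.symm)

theorem meets_iff {n : ℕ} (x a : SetPart n) :
    (∃ l : SetPart n, IsAtom l ∧ l ≤ x ∧ l ≤ a) ↔ ¬ Crossing x a := by
  have h1 : (∃ l : SetPart n, IsAtom l ∧ l ≤ x ∧ l ≤ a) ↔ x ⊓ a ≠ ⊥ := by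
    constructor
    · rintro ⟨l, hl, h1, h2⟩ h
      exact hl.1 (le_bot_iff.1 (h ▸ le_inf h1 h2))
    · intro h
      rcases eq_bot_or_exists_atom_le (x ⊓ a) with h' | ⟨l, hl, hle⟩
      · exact absurd h' h
      · exact ⟨l, hl, hle.trans inf_le_left, hle.trans inf_le_right⟩
  rw [h1, not_iff_not]
  constructor
  · intro h b hb c hc
    by_cases he : b ∩ c = ∅
    · simp [he]
    · have : b ∩ c ∈ (x ⊓ a).parts := by
        rw [Finpartition.parts_inf, mem_erase]
        exact ⟨he, mem_image.2 ⟨(b, c), mem_product.2 ⟨hb, hc⟩, rfl⟩⟩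
      rw [h, Finpartition.mem_bot_iff] at this
      obtain ⟨v, _, hv⟩ := this
      rw [← hv]; simp
  · intro h
    rw [← le_bot_iff]
    intro t ht
    refine ⟨t, ?_, le_rfl⟩
    have hne := (x ⊓ a).nonempty_of_mem_parts ht
    rw [Finpartition.parts_inf, mem_erase] at ht
    obtain ⟨⟨b, c⟩, hbc, rfl⟩ := mem_image.1 ht.2
    rw [mem_product] at hbc
    have hle := h b hbc.1 c hbc.2
    have : #(b ∩ c) = 1 := le_antisymm hle (card_pos.2 hne)
    obtain ⟨v, hv⟩ := card_eq_one.1 this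
    rw [Finpartition.mem_bot_iff]
    exact ⟨v, mem_univ _, hv.symm⟩

theorem meets_all_iff {n : ℕ} (A : Set (Nat.Partition n)) (x : SetPart n) :
    (∀ a ∈ fi A, ∃ l : SetPart n, IsAtom l ∧ l ≤ x ∧ l ≤ a) ↔
      ∀ lam ∈ A, ¬ DomLEConj (shape x) lam := by
  constructor
  · intro h lam hlam hd
    obtain ⟨a, rfl, hc⟩ := crossing_of_dom x lam hd
    exact (meets_iff x a).1 (h a hlam) hc
  · intro h a ha
    exact (meets_iff x a).2 fun hc => h _ ha (dom_of_crossing x a hc)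

theorem map_card_eq_sum {α : Type*} (s : Finset (Finset α)) :
    s.val.map Finset.card = ∑ b ∈ s, ({#b} : Multiset ℕ) := by
  rw [Finset.sum, ← Multiset.sum_map_singleton (s.val.map Finset.card), Multiset.map_map]
  rfl

theorem refLE_of_le {n : ℕ} {y x : SetPart n} (h : y ≤ x) : RefLE (shape y) (shape x) := by
  classical
  have hun : ∀ b ∈ x.parts, b = (y.parts.filter (· ⊆ b)).biUnion id := by
    intro b hb
    ext v
    simp only [mem_biUnion, mem_filter, id]
    constructor
    · intro hv
      obtain ⟨c, hc, hvc⟩ := y.exists_mem (mem_univ v)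
      obtain ⟨b', hb', hcb⟩ := h hc
      have : b' = b := x.eq_of_mem_parts hb' hb (hcb hvc) hv
      exact ⟨c, ⟨hc, this ▸ hcb⟩, hvc⟩
    · rintro ⟨c, ⟨_, hcb⟩, hv⟩
      exact hcb hv
  refine ⟨x.parts.val.map fun b => (y.parts.filter (· ⊆ b)).val.map Finset.card, ?_, ?_⟩
  · rw [Multiset.map_map]
    change _ = x.parts.val.map Finset.card
    apply Multiset.map_congr rfl
    intro b hb
    conv_rhs => rw [hun b hb]
    rw [Finset.card_biUnion]
    · rfl
    · intro c hc d hd hcd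
      exact y.disjoint (mem_filter.1 hc).1 (mem_filter.1 hd).1 hcd
  · change ∑ b ∈ x.parts, (y.parts.filter (· ⊆ b)).val.map Finset.card
      = y.parts.val.map Finset.card
    simp only [map_card_eq_sum]
    rw [← Finset.sum_biUnion]
    · congr 1
      ext c
      simp only [mem_biUnion, mem_filter]
      constructor
      · rintro ⟨_, _, hc, _⟩; exact hc
      · intro hc
        obtain ⟨b, hb, hcb⟩ := h hc
        exact ⟨b, hb, hc, hcb⟩
    · intro b hb b' hb' hne
      change Disjoint _ _
      rw [Finset.disjoint_left]
      intro c hc hc'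
      obtain ⟨v, hv⟩ := y.nonempty_of_mem_parts (mem_filter.1 hc).1
      exact hne (x.eq_of_mem_parts hb hb' ((mem_filter.1 hc).2 hv) ((mem_filter.1 hc').2 hv))

theorem eq_of_le_of_shape {n : ℕ} {y x : SetPart n} (h : y ≤ x) (hs : shape y = shape x) :
    y = x := by
  classical
  have hcard : #y.parts = #x.parts := by
    have := congrArg (fun p => Multiset.card p.parts) hs
    simpa [shape] using this
  have hex : ∀ b ∈ x.parts, ∃ c ∈ y.parts, c ⊆ b := fun b hb => Finpartition.exists_le_of_le h hb
  choose! φ hφ1 hφ2 using hex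
  have hinj : Set.InjOn φ x.parts := by
    intro b hb b' hb' heq
    obtain ⟨v, hv⟩ := y.nonempty_of_mem_parts (hφ1 b hb)
    exact x.eq_of_mem_parts hb hb' (hφ2 b hb hv) (hφ2 b' hb' (heq ▸ hv))
  have himg : x.parts.image φ = y.parts :=
    eq_of_subset_of_card_le (by intro c hc; obtain ⟨b, hb, rfl⟩ := mem_image.1 hc; exact hφ1 b hb)
      (by rw [card_image_of_injOn hinj, hcard])
  have hsub : x.parts ⊆ y.parts := by
    intro b hb
    have : b = φ b := by
      refine Subset.antisymm ?_ (hφ2 b hb)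
      intro v hv
      obtain ⟨c, hc, hvc⟩ := y.exists_mem (mem_univ v)
      rw [← himg] at hc
      obtain ⟨b', hb', rfl⟩ := mem_image.1 hc
      have : b' = b := x.eq_of_mem_parts hb' hb (hφ2 b' hb' hvc) hv
      exact this ▸ hvc
    rw [this]; exact hφ1 b hb
  exact Finpartition.ext (eq_of_subset_of_card_le hsub hcard.le).symm

theorem exists_finpartition {α : Type*} [DecidableEq α] (M : Multiset ℕ) :
    ∀ s : Finset α, (∀ i ∈ M, 0 < i) → M.sum = #s →
      ∃ P : Finpartition s, P.parts.val.map Finset.card = M := by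
  induction M using Multiset.induction with
  | empty =>
    intro s _ hs
    obtain rfl : s = ∅ := by
      rw [← card_eq_zero, ← hs]; rfl
    exact ⟨Finpartition.empty _, rfl⟩
  | cons a M ih =>
    intro s hpos hs
    rw [Multiset.sum_cons] at hs
    obtain ⟨t, hts, ht⟩ := Finset.exists_subset_card_eq (s := s) (n := a) (by omega)
    have hsd : M.sum = #(s \ t) := by
      rw [card_sdiff_of_subset hts]; omega
    obtain ⟨P, hP⟩ := ih (s \ t) (fun i hi => hpos i (Multiset.mem_cons_of_mem hi)) hsd
    have htne : t ≠ ∅ := by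
      have := hpos a (Multiset.mem_cons_self _ _)
      rintro rfl
      simp at ht; omega
    refine ⟨P.extend (b := t) htne sdiff_disjoint (by simpa using hts), ?_⟩
    have htP : t ∉ P.parts := by
      intro h
      obtain ⟨v, hv⟩ := nonempty_iff_ne_empty.2 htne
      exact (mem_sdiff.1 (P.subset h hv)).2 hv
    simp [Finpartition.extend, htP, insert_val, Multiset.ndinsert_of_notMem, ht, hP]

theorem exists_lift {ι : Type*} [DecidableEq ι] (c : ι → ℕ) (M : Finset ι) :
    ∀ g : Multiset (Multiset ℕ), g.map Multiset.sum = M.val.map c →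
      ∃ h : ι → Multiset ℕ, g = M.val.map h ∧ ∀ b ∈ M, (h b).sum = c b := by
  induction M using Finset.induction with
  | empty =>
    intro g hg
    refine ⟨fun _ => 0, ?_, by simp⟩
    simpa using hg
  | insert b M hb ih =>
    intro g hg
    rw [insert_val_of_notMem hb, Multiset.map_cons] at hg
    obtain ⟨q, hq, hqs, hrest⟩ := (Multiset.map_eq_cons _ _ _ _).2 hg
    obtain ⟨h, hh1, hh2⟩ := ih _ hrest
    have hne : ∀ b' ∈ M, b' ≠ b := fun b' hb' h => hb (h ▸ hb')
    refine ⟨Function.update h b q, ?_, ?_⟩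
    · rw [insert_val_of_notMem hb, Multiset.map_cons, Function.update_self,
        ← Multiset.cons_erase hq, hh1]
      congr 1
      exact Multiset.map_congr rfl fun b' hb' => by
        rw [Function.update_of_ne (hne b' hb')]
    · intro b' hb'
      rcases mem_insert.1 hb' with rfl | hb'
      · rw [Function.update_self, hqs]
      · rw [Function.update_of_ne (hne b' hb'), hh2 b' hb']

theorem exists_le_of_refLE {n : ℕ} (x : SetPart n) (ν : Nat.Partition n)
    (h : RefLE ν (shape x)) : ∃ y ≤ x, shape y = ν := by
  classical
  obtain ⟨g, hg1, hg2⟩ := h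
  obtain ⟨p, rfl, hp⟩ := exists_lift Finset.card x.parts g hg1
  have hg2 : ∑ b ∈ x.parts, p b = ν.parts := hg2
  have hpos : ∀ b ∈ x.parts, ∀ i ∈ p b, 0 < i := by
    intro b hb i hi
    refine ν.parts_pos ?_
    rw [← hg2]
    exact Multiset.mem_sum.2 ⟨b, hb, hi⟩
  have hQ : ∀ b, ∃ P : Finpartition b, b ∈ x.parts → P.parts.val.map Finset.card = p b := by
    intro b
    by_cases hb : b ∈ x.parts
    · obtain ⟨P, hP⟩ := exists_finpartition (p b) b (hpos b hb) (hp b hb)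
      exact ⟨P, fun _ => hP⟩
    · exact ⟨⊥, fun h => absurd h hb⟩
  choose Q hQ using hQ
  refine ⟨x.bind fun b _ => Q b, ?_, ?_⟩
  · intro c hc
    obtain ⟨b, hb, hcb⟩ := Finpartition.mem_bind.1 hc
    exact ⟨b, hb, (Q b).subset hcb⟩
  · apply Nat.Partition.ext
    change (x.bind fun b _ => Q b).parts.val.map Finset.card = _
    have hparts : (x.bind fun b _ => Q b).parts = x.parts.biUnion fun b => (Q b).parts := by
      ext c; simp [Finpartition.mem_bind]
    rw [hparts, map_card_eq_sum, Finset.sum_biUnion, ← hg2]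
    · apply sum_congr rfl
      intro b hb
      rw [← map_card_eq_sum, hQ b hb]
    · intro b hb b' hb' hne
      change Disjoint _ _
      rw [Finset.disjoint_left]
      intro c hc hc'
      obtain ⟨v, hv⟩ := (Q b).nonempty_of_mem_parts hc
      exact hne (x.eq_of_mem_parts hb hb' ((Q b).subset hc hv) ((Q b').subset hc' hv))


/-- Theorem 3.1: for an antichain `A` in `Ref(n)`, the blocker of `fi(A)` in `Π_n`
is `fi(B)`, where `B` consists of the refinement-minimal number partitions among
those that are not dominated by any conjugate `λ'` with `λ ∈ A`. -/
theorem blocker_fi_eq (n : ℕ) (A : Set (Nat.Partition n))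
    (hne : A.Nonempty) (hbot : onesPart n ∉ A) (hanti : IsAntichain RefLE A) :
    blocker (fi A) =
      fi {μ | (∀ lam ∈ A, ¬ DomLEConj μ lam) ∧
        ∀ ν : Nat.Partition n, (∀ lam ∈ A, ¬ DomLEConj ν lam) → RefLE ν μ → ν = μ} := by
  ext x
  simp only [blocker, fi, Set.mem_ofPred_eq]
  have key := meets_all_iff A
  simp only [fi, Set.mem_ofPred_eq] at key
  simp only [key]
  constructor
  · rintro ⟨h1, h2⟩
    refine ⟨h1, fun ν hν hle => ?_⟩
    obtain ⟨y, hy, rfl⟩ := exists_le_of_refLE x ν hle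
    rw [h2 y hν hy]
  · rintro ⟨h1, h2⟩
    exact ⟨h1, fun y hy hle => eq_of_le_of_shape hle (h2 _ hy (refLE_of_le hle))⟩
end

section
/- Fix n and 2 ≤ p ≤ n. In the partition lattice Π_n, the blocker of the antichain A_p of all set partitions of [n] with exactly p − 1 blocks is the antichain fi((p, 1^{n-p})) of all set partitions of hook shape (p, 1^{n-p}) (one block of size p and n − p singleton blocks); conversely, the blocker of fi((p, 1^{n-p})) is A_p. -/
open Finset

/-- The hook-shaped number partition `(p, 1^{n-p})`: one part equal to `p` and
`n - p` parts equal to `1`. -/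
def hook (n p : ℕ) (hp : 0 < p) (hpn : p ≤ n) : Nat.Partition n where
  parts := p ::ₘ Multiset.replicate (n - p) 1
  parts_pos := by
    intro i hi
    simp only [Multiset.mem_cons, Multiset.mem_replicate] at hi
    rcases hi with rfl | ⟨-, rfl⟩
    · exact hp
    · exact one_pos
  parts_sum := by
    simp only [Multiset.sum_cons, Multiset.sum_replicate, smul_eq_mul, mul_one]
    omega

/-- `x` and `a` share a pair of distinct elements lying in a common block. -/
def Hits {n : ℕ} (x a : SetPart n) : Prop :=
  ∃ i j : Fin n, i ≠ j ∧ x.part i = x.part j ∧ a.part i = a.part j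

theorem part_eq_of_mem_mem {n : ℕ} (x : SetPart n) {B : Finset (Fin n)} (hB : B ∈ x.parts)
    {i j : Fin n} (hi : i ∈ B) (hj : j ∈ B) : x.part i = x.part j := by
  rw [x.part_eq_of_mem hB hi, x.part_eq_of_mem hB hj]

theorem part_eq_of_le {n : ℕ} {x y : SetPart n} (h : x ≤ y) {i j : Fin n}
    (hij : x.part i = x.part j) : y.part i = y.part j := by
  obtain ⟨c, hc, hic⟩ := h (x.part_mem.2 (mem_univ i))
  refine part_eq_of_mem_mem y hc (hic (x.mem_part (mem_univ i))) (hic ?_)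
  rw [hij]
  exact x.mem_part (mem_univ j)

theorem le_of_part_eq {n : ℕ} {x y : SetPart n}
    (h : ∀ i j, x.part i = x.part j → y.part i = y.part j) : x ≤ y := by
  intro b hb
  obtain ⟨i, hi⟩ := x.nonempty_of_mem_parts hb
  refine ⟨y.part i, y.part_mem.2 (mem_univ i), fun j hj => ?_⟩
  rw [h i j (part_eq_of_mem_mem x hb hi hj)]
  exact y.mem_part (mem_univ j)

theorem part_bot_inj {n : ℕ} {i j : Fin n}
    (h : (⊥ : SetPart n).part i = (⊥ : SetPart n).part j) : i = j := by
  have hi : i ∈ (⊥ : SetPart n).part i := (⊥ : SetPart n).mem_part (mem_univ i)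
  have hj : j ∈ (⊥ : SetPart n).part i := by
    rw [h]; exact (⊥ : SetPart n).mem_part (mem_univ j)
  obtain ⟨a, -, ha⟩ := Finpartition.mem_bot_iff.1 ((⊥ : SetPart n).part_mem.2 (mem_univ i))
  rw [← ha, mem_singleton] at hi hj
  rw [hi, hj]

theorem exists_atom_iff {n : ℕ} (x a : SetPart n) :
    (∃ l : SetPart n, IsAtom l ∧ l ≤ x ∧ l ≤ a) ↔ Hits x a := by
  constructor
  · rintro ⟨l, hl, hx, ha⟩
    by_contra hcon
    apply hl.1
    refine le_bot_iff.1 (le_of_part_eq fun i j hij => ?_)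
    by_cases h : i = j
    · rw [h]
    · exact absurd ⟨i, j, h, part_eq_of_le hx hij, part_eq_of_le ha hij⟩ hcon
  · rintro ⟨i, j, hij, hx, ha⟩
    have hne : x ⊓ a ≠ ⊥ := by
      intro h
      apply hij
      apply part_bot_inj
      rw [← h]
      have hm : x.part i ∩ a.part i ∈ (x ⊓ a).parts := by
        rw [Finpartition.parts_inf, mem_erase]
        refine ⟨?_, mem_image.2 ⟨(x.part i, a.part i), ?_, rfl⟩⟩
        · apply Finset.Nonempty.ne_empty
          exact ⟨i, mem_inter.2 ⟨x.mem_part (mem_univ i), a.mem_part (mem_univ i)⟩⟩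
        · exact mem_product.2 ⟨x.part_mem.2 (mem_univ i), a.part_mem.2 (mem_univ i)⟩
      refine part_eq_of_mem_mem _ hm
        (mem_inter.2 ⟨x.mem_part (mem_univ i), a.mem_part (mem_univ i)⟩) ?_
      rw [hx, ha]
      exact mem_inter.2 ⟨x.mem_part (mem_univ j), a.mem_part (mem_univ j)⟩
    obtain ⟨l, hl, hle⟩ := (eq_bot_or_exists_atom_le (x ⊓ a)).resolve_left hne
    exact ⟨l, hl, hle.trans inf_le_left, hle.trans inf_le_right⟩

/-- Refining a partition to one with any prescribed larger number of blocks. -/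
theorem exists_le_card {n : ℕ} (x : SetPart n) (k : ℕ) (hk : x.parts.card ≤ k) (hkn : k ≤ n) :
    ∃ y ≤ x, y.parts.card = k := by
  induction k, hk using Nat.le_induction with
  | base => exact ⟨x, le_rfl, rfl⟩
  | succ k hk ih =>
    obtain ⟨y, hyx, hy⟩ := ih (by omega)
    have hB : ∃ B ∈ y.parts, 1 < B.card := by
      by_contra! hcon
      have h1 := y.sum_card_parts
      have h2 := Finset.sum_le_card_nsmul y.parts (fun i => i.card) 1 hcon
      simp at h1 h2
      omega
    obtain ⟨B, hB, hB1⟩ := hB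
    have hQ : ∀ i ∈ y.parts, ∃ Q : Finpartition i, Q.parts.card = if i = B then 2 else 1 := by
      intro i hi
      have := card_pos.2 (y.nonempty_of_mem_parts hi)
      obtain ⟨Q, -, hQ⟩ := Finpartition.exists_equipartition_card_eq i
        (n := if i = B then 2 else 1) (by split_ifs <;> simp)
        (by split_ifs with h
            · rw [h]; exact hB1
            · exact this)
      exact ⟨Q, hQ⟩
    choose Q hQ using hQ
    refine ⟨y.bind Q, le_trans ?_ hyx, ?_⟩
    · intro b hb
      obtain ⟨A, hA, hbA⟩ := Finpartition.mem_bind.1 hb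
      exact ⟨A, hA, (Q A hA).le hbA⟩
    · rw [Finpartition.card_bind]
      simp only [hQ]
      rw [Finset.sum_attach y.parts (fun A => if A = B then 2 else 1),
        ← Finset.add_sum_erase _ _ hB, Finset.sum_congr rfl (g := fun _ => 1)]
      · rw [Finset.sum_const, Finset.card_erase_of_mem hB]
        have := card_pos.2 ⟨B, hB⟩
        simp
        omega
      · intro A hA
        rw [if_neg (Finset.ne_of_mem_erase hA)]

theorem eq_of_le_of_card_le {n : ℕ} {x y : SetPart n} (h : y ≤ x)
    (hc : y.parts.card ≤ x.parts.card) : y = x := by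
  have h' : ∀ b, b ∈ y.parts → ∃ c, c ∈ x.parts ∧ b ⊆ c := fun b hb => h hb
  choose! f hf hle using h'
  have hpart : ∀ i, f (y.part i) = x.part i := fun i => by
    have hm := y.part_mem.2 (mem_univ i)
    exact (x.part_eq_of_mem (hf _ hm) (hle _ hm (y.mem_part (mem_univ i)))).symm
  have hinj : Set.InjOn f (y.parts : Set (Finset (Fin n))) := by
    refine Finset.injOn_of_surjOn_of_card_le f (t := x.parts) (fun b hb => hf b hb) ?_ hc
    intro b hb
    obtain ⟨i, hi⟩ := x.nonempty_of_mem_parts hb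
    exact ⟨y.part i, y.part_mem.2 (mem_univ i), by rw [hpart, x.part_eq_of_mem hb hi]⟩
  refine le_antisymm h (le_of_part_eq fun i j hij => ?_)
  apply hinj (y.part_mem.2 (mem_univ i)) (y.part_mem.2 (mem_univ j))
  rw [hpart, hpart, hij]

theorem mem_fi_hook_iff {n p : ℕ} (hp : 0 < p) (hpn : p ≤ n) (x : SetPart n) :
    x ∈ fi {hook n p hp hpn} ↔
      ∃ B ∈ x.parts, B.card = p ∧ ∀ C ∈ x.parts, C ≠ B → C.card = 1 := by
  have key : x ∈ fi {hook n p hp hpn} ↔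
      x.parts.val.map Finset.card = p ::ₘ Multiset.replicate (n - p) 1 := by
    simp only [fi, Set.mem_setOf_eq, Set.mem_singleton_iff, Nat.Partition.ext_iff, shape, hook]
  rw [key]
  have hsplit : ∀ B ∈ x.parts,
      x.parts.val.map Finset.card = B.card ::ₘ (x.parts.erase B).val.map Finset.card := by
    intro B hB
    rw [← Multiset.map_cons, Finset.erase_val, Multiset.cons_erase hB]
  constructor
  · intro h
    have hm : p ∈ x.parts.val.map Finset.card := by rw [h]; simp
    obtain ⟨B, hB, hBp⟩ := Multiset.mem_map.1 hm
    refine ⟨B, hB, hBp, fun C hC hCB => ?_⟩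
    rw [hsplit B hB, hBp, Multiset.cons_inj_right] at h
    have : C.card ∈ (x.parts.erase B).val.map Finset.card :=
      Multiset.mem_map_of_mem _ (Finset.mem_erase.2 ⟨hCB, hC⟩)
    rw [h] at this
    exact Multiset.eq_of_mem_replicate this
  · rintro ⟨B, hB, hBp, hC⟩
    rw [hsplit B hB, hBp, Multiset.cons_inj_right, Multiset.eq_replicate]
    have h1 : ∀ C ∈ x.parts.erase B, C.card = 1 := fun C h =>
      hC C (Finset.mem_of_mem_erase h) (Finset.ne_of_mem_erase h)
    constructor
    · have h2 := x.sum_card_parts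
      rw [← Finset.add_sum_erase _ _ hB, Finset.sum_congr rfl h1] at h2
      simp only [sum_const, smul_eq_mul, mul_one, card_univ, Fintype.card_fin] at h2
      rw [Multiset.card_map, Finset.card_val]
      omega
    · intro b hb
      obtain ⟨C, hCm, rfl⟩ := Multiset.mem_map.1 hb
      exact h1 C hCm

/-- The partition with one block `T` and all other blocks singletons. -/
theorem exists_hook {n : ℕ} (T : Finset (Fin n)) (hT : T.Nonempty) :
    ∃ x : SetPart n, T ∈ x.parts ∧ ∀ C ∈ x.parts, C ≠ T → C.card = 1 := by
  refine ⟨(⊥ : Finpartition (univ \ T)).extend (b := T) hT.ne_empty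
    Finset.sdiff_disjoint (by simp), ?_, ?_⟩
  · simp [Finpartition.extend]
  · intro C hC hCT
    simp only [Finpartition.extend, mem_insert] at hC
    obtain ⟨a, -, rfl⟩ := Finpartition.mem_bot_iff.1 (hC.resolve_left hCT)
    simp

theorem le_of_hook {n : ℕ} {x y : SetPart n} {T B : Finset (Fin n)}
    (hC : ∀ C ∈ x.parts, C ≠ T → C.card = 1) (hB : B ∈ y.parts) (hTB : T ⊆ B) : x ≤ y := by
  intro C hCx
  by_cases h : C = T
  · exact ⟨B, hB, h ▸ hTB⟩
  · obtain ⟨a, rfl⟩ := Finset.card_eq_one.1 (hC C hCx h)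
    exact ⟨y.part a, y.part_mem.2 (mem_univ a), by simpa using y.mem_part (mem_univ a)⟩

theorem hits_of_card {n : ℕ} {x a : SetPart n} {B : Finset (Fin n)} (hB : B ∈ x.parts)
    (hc : a.parts.card < B.card) : Hits x a := by
  obtain ⟨i, hi, j, hj, hij, h⟩ := Finset.exists_ne_map_eq_of_card_lt_of_maps_to hc
    (f := a.part) (fun i _ => a.part_mem.2 (mem_univ i))
  exact ⟨i, j, hij, part_eq_of_mem_mem x hB hi hj, h⟩

theorem Hits.mono {n : ℕ} {x a b : SetPart n} (h : Hits x a) (hab : a ≤ b) : Hits x b := by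
  obtain ⟨i, j, hij, hx, ha⟩ := h
  exact ⟨i, j, hij, hx, part_eq_of_le hab ha⟩

/-- Fact 1. -/
theorem hits_card_iff {n p : ℕ} (hp : 2 ≤ p) (hpn : p ≤ n) (x : SetPart n) :
    (∀ a ∈ {σ : SetPart n | σ.parts.card = p - 1}, Hits x a) ↔
      ∃ B ∈ x.parts, p ≤ B.card := by
  constructor
  · intro h
    by_contra! hcon
    let f : Fin n → ℕ := fun i => ((x.part i).filter (· < i)).card
    have hflt : ∀ i, f i < p - 1 := by
      intro i
      have h1 := hcon _ (x.part_mem.2 (mem_univ i))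
      have h2 : f i < (x.part i).card := by
        apply Finset.card_lt_card
        rw [Finset.filter_ssubset]
        exact ⟨i, x.mem_part (mem_univ i), lt_irrefl i⟩
      omega
    have hmono : ∀ i j, x.part i = x.part j → i < j → f i < f j := by
      intro i j hij hlt
      apply Finset.card_lt_card
      rw [hij, Finset.ssubset_iff_of_subset]
      · refine ⟨i, mem_filter.2 ⟨?_, hlt⟩, by simp⟩
        rw [← hij]; exact x.mem_part (mem_univ i)
      · intro k hk
        rw [mem_filter] at hk ⊢
        exact ⟨hk.1, hk.2.trans hlt⟩
    classical
    let s : SetPart n := Finpartition.ofSetoid (Setoid.ker f)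
    have hs : ∀ i j, s.part i = s.part j → f i = f j := by
      intro i j hij
      have : j ∈ s.part i := by rw [hij]; exact s.mem_part (mem_univ j)
      exact Setoid.ker_def.1 (Finpartition.mem_part_ofSetoid_iff_rel.1 this)
    have hs' : ∀ i j, f i = f j → s.part i = s.part j := by
      intro i j hij
      have : j ∈ s.part i := Finpartition.mem_part_ofSetoid_iff_rel.2 (Setoid.ker_def.2 hij)
      exact ((s.mem_part_iff_part_eq_part (mem_univ j) (mem_univ i)).1 this).symm
    have hcard : s.parts.card ≤ p - 1 := by
      obtain ⟨r, -, hr⟩ := s.exists_subset_part_bijOn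
      have h1 : s.parts ⊆ r.image s.part := by
        intro b hb
        obtain ⟨i, hi, rfl⟩ := hr.surjOn hb
        exact mem_image_of_mem _ hi
      refine (card_le_card h1).trans (card_image_le.trans ?_)
      rw [← Finset.card_range (p - 1)]
      refine Finset.card_le_card_of_injOn f (fun i _ => by simpa using hflt i) ?_
      intro i hi j hj hij
      exact hr.injOn hi hj (hs' i j hij)
    obtain ⟨y, hys, hy⟩ := exists_le_card s (p - 1) hcard (by omega)
    obtain ⟨i, j, hij, hx, hs2⟩ := (h y hy).mono hys
    have := hs i j hs2
    rcases lt_or_gt_of_ne hij with h1 | h1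
    · have := hmono i j hx h1; omega
    · have := hmono j i hx.symm h1; omega
  · rintro ⟨B, hB, hBp⟩ a ha
    have ha' : a.parts.card = p - 1 := ha
    exact hits_of_card hB (by omega)

theorem Hits.swap {n : ℕ} {x a : SetPart n} (h : Hits x a) : Hits a x := by
  obtain ⟨i, j, hij, hx, ha⟩ := h
  exact ⟨i, j, hij, ha, hx⟩

/-- Fact 2. -/
theorem hits_hook_iff {n p : ℕ} (h0 : 0 < p) (hp : 2 ≤ p) (hpn : p ≤ n) (y : SetPart n) :
    (∀ a ∈ fi {hook n p h0 hpn}, Hits y a) ↔ y.parts.card ≤ p - 1 := by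
  constructor
  · intro h
    by_contra! hcon
    obtain ⟨r, -, hr⟩ := y.exists_subset_part_bijOn
    have hrc : p ≤ r.card := by
      have h1 : y.parts ⊆ r.image y.part := by
        intro b hb
        obtain ⟨i, hi, rfl⟩ := hr.surjOn hb
        exact mem_image_of_mem _ hi
      have := (card_le_card h1).trans card_image_le
      omega
    obtain ⟨T, hTr, hTp⟩ := Finset.exists_subset_card_eq hrc
    obtain ⟨x, hx, hxC⟩ := exists_hook T (card_pos.1 (by omega))
    obtain ⟨i, j, hij, hy, hx'⟩ := h x ((mem_fi_hook_iff _ _ x).2 ⟨T, hx, hTp, hxC⟩)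
    have hi := x.mem_part (mem_univ i)
    have hj : j ∈ x.part i := by rw [hx']; exact x.mem_part (mem_univ j)
    have hm := x.part_mem.2 (mem_univ i)
    by_cases hT : x.part i = T
    · rw [hT] at hi hj
      exact hij (hr.injOn (hTr hi) (hTr hj) hy)
    · obtain ⟨b, hb⟩ := Finset.card_eq_one.1 (hxC _ hm hT)
      rw [hb, mem_singleton] at hi hj
      exact hij (hi.trans hj.symm)
  · intro h a ha
    obtain ⟨B, hB, hBp, -⟩ := (mem_fi_hook_iff _ _ a).1 ha
    exact (hits_of_card hB (by omega)).swap

/-- Example 3.2: in `Π_n`, the blocker of the antichain of all set partitions with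
exactly `p - 1` blocks is the antichain of all set partitions of hook shape
`(p, 1^{n-p})`, and conversely. -/
theorem blocker_card_blocks_hook (n p : ℕ) (hp : 2 ≤ p) (hpn : p ≤ n) :
    blocker {σ : SetPart n | σ.parts.card = p - 1} =
        fi {hook n p (by omega) hpn} ∧
      blocker (fi {hook n p (by omega) hpn}) =
        {σ : SetPart n | σ.parts.card = p - 1} := by
  constructor
  · ext x
    simp only [blocker, exists_atom_iff, hits_card_iff hp hpn]
    rw [mem_fi_hook_iff]
    constructor
    · rintro ⟨⟨B, hB, hBp⟩, hmin⟩
      obtain ⟨T, hTB, hTp⟩ := Finset.exists_subset_card_eq hBp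
      obtain ⟨y, hy, hyC⟩ := exists_hook T (card_pos.1 (by omega))
      have := hmin y ⟨T, hy, hTp.ge⟩ (le_of_hook hyC hB hTB)
      subst this
      exact ⟨T, hy, hTp, hyC⟩
    · rintro ⟨B, hB, hBp, hC⟩
      refine ⟨⟨B, hB, hBp.ge⟩, ?_⟩
      rintro y ⟨D, hD, hDp⟩ hyx
      obtain ⟨E, hE, hDE⟩ := hyx hD
      have hcard := card_le_card hDE
      have hEB : E = B := by
        by_contra hne
        have := hC E hE hne
        omega
      subst hEB
      have hDE' : D = E := Finset.eq_of_subset_of_card_le hDE (by omega)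
      exact le_antisymm hyx (le_of_hook hC hD hDE'.ge)
  · ext x
    simp only [blocker, exists_atom_iff, hits_hook_iff (Nat.lt_of_lt_of_le Nat.zero_lt_two hp) hp hpn, Set.mem_setOf_eq]
    constructor
    · rintro ⟨h, hmin⟩
      obtain ⟨y, hyx, hy⟩ := exists_le_card x (p - 1) h (by omega)
      rw [← hmin y hy.le hyx]
      exact hy
    · intro h
      exact ⟨h.le, fun y hy hyx => eq_of_le_of_card_le hyx (by omega)⟩
end

section
/- Let A be any S_n-invariant antichain in the partition lattice Π_n. Then the blocker A* contains the hook-shape antichain fi((p, 1^{n-p})) for some p, i.e. A* ⊇ fi((p, 1^{n-p})) for some 2 ≤ p ≤ n. -/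
open Finset

/-- The action of a permutation of `{1,…,n}` on set partitions of `{1,…,n}`. -/
def permAct {n : ℕ} (g : Equiv.Perm (Fin n)) (σ : SetPart n) : SetPart n :=
  (σ.map (g.finsetCongr.toOrderIso
      (fun s t h => by
        simp only [Equiv.finsetCongr_apply]
        exact Finset.map_subset_map.2 h)
      (fun s t h => by
        simp only [Equiv.finsetCongr_symm, Equiv.finsetCongr_apply]
        exact Finset.map_subset_map.2 h))).copy
    (Finset.map_univ_equiv g)

/-- A set of set partitions is `S_n`-invariant if it is closed under the action of
the symmetric group `S_n` on `Π_n`. -/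
def SnInvariant {n : ℕ} (A : Set (SetPart n)) : Prop :=
  ∀ g : Equiv.Perm (Fin n), ∀ σ ∈ A, permAct g σ ∈ A

def SameBlk {n : ℕ} (σ : SetPart n) (i j : Fin n) : Prop := ∃ b ∈ σ.parts, i ∈ b ∧ j ∈ b

lemma sameBlk_refl {n : ℕ} (σ : SetPart n) (i : Fin n) : SameBlk σ i i :=
  ⟨σ.part i, σ.part_mem.2 (mem_univ i), σ.mem_part (mem_univ i), σ.mem_part (mem_univ i)⟩

lemma blk_eq {n : ℕ} (σ : SetPart n) {b c : Finset (Fin n)} (hb : b ∈ σ.parts)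
    (hc : c ∈ σ.parts) {i : Fin n} (h1 : i ∈ b) (h2 : i ∈ c) : b = c :=
  σ.eq_of_mem_parts hb hc h1 h2

lemma le_iff_sameBlk {n : ℕ} (σ τ : SetPart n) :
    σ ≤ τ ↔ ∀ i j, SameBlk σ i j → SameBlk τ i j := by
  constructor
  · rintro h i j ⟨b, hb, hi, hj⟩
    obtain ⟨c, hc, hbc⟩ := h hb
    exact ⟨c, hc, hbc hi, hbc hj⟩
  · intro h b hb
    obtain ⟨i, hi⟩ := σ.nonempty_of_mem_parts hb
    refine ⟨τ.part i, τ.part_mem.2 (mem_univ i), ?_⟩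
    intro j hj
    obtain ⟨c, hc, h1, h2⟩ := h i j ⟨b, hb, hi, hj⟩
    rw [blk_eq τ (τ.part_mem.2 (mem_univ i)) hc (τ.mem_part (mem_univ i)) h1]
    exact h2

lemma ne_bot_iff_sameBlk {n : ℕ} (σ : SetPart n) :
    σ ≠ ⊥ ↔ ∃ i j, i ≠ j ∧ SameBlk σ i j := by
  constructor
  · intro h
    by_contra! hc
    apply h
    rw [eq_bot_iff, le_iff_sameBlk]
    intro i j hij
    by_cases e : i = j
    · subst e; exact sameBlk_refl _ _
    · exact absurd hij (hc i j e)
  · rintro ⟨i, j, hne, b, hb, hi, hj⟩ rfl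
    rw [Finpartition.mem_bot_iff] at hb
    obtain ⟨a, -, rfl⟩ := hb
    simp at hi hj
    exact hne (hi.trans hj.symm)

lemma hits_iff {n : ℕ} (x a : SetPart n) :
    (∃ l : SetPart n, IsAtom l ∧ l ≤ x ∧ l ≤ a) ↔
      ∃ i j, i ≠ j ∧ SameBlk x i j ∧ SameBlk a i j := by
  constructor
  · rintro ⟨l, hl, hx, ha⟩
    obtain ⟨i, j, hne, h⟩ := (ne_bot_iff_sameBlk l).1 hl.1
    exact ⟨i, j, hne, (le_iff_sameBlk _ _).1 hx i j h, (le_iff_sameBlk _ _).1 ha i j h⟩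
  · rintro ⟨i, j, hne, ⟨b, hb, hbi, hbj⟩, ⟨c, hc, hci, hcj⟩⟩
    have h : x ⊓ a ≠ ⊥ := by
      rw [ne_bot_iff_sameBlk]
      refine ⟨i, j, hne, b ∩ c, ?_, by simp [*], by simp [*]⟩
      rw [Finpartition.parts_inf, mem_erase]
      refine ⟨Finset.ne_empty_of_mem (a := i) (by simp [*]), ?_⟩
      exact mem_image.2 ⟨(b, c), by simp [*], rfl⟩
    obtain ⟨l, hl, hle⟩ := (eq_bot_or_exists_atom_le (x ⊓ a)).resolve_left h
    exact ⟨l, hl, hle.trans inf_le_left, hle.trans inf_le_right⟩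

lemma sameBlk_permAct {n : ℕ} (g : Equiv.Perm (Fin n)) (σ : SetPart n) {i j : Fin n}
    (h : SameBlk (permAct g σ) i j) : ∃ i' j', g i' = i ∧ g j' = j ∧ SameBlk σ i' j' := by
  obtain ⟨b, hb, hi, hj⟩ := h
  obtain ⟨c, hc, rfl⟩ := mem_map.1 hb
  change i ∈ c.map g.toEmbedding at hi
  change j ∈ c.map g.toEmbedding at hj
  obtain ⟨i', hi', rfl⟩ := mem_map.1 hi
  obtain ⟨j', hj', rfl⟩ := mem_map.1 hj
  exact ⟨i', j', rfl, rfl, c, hc, hi', hj'⟩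

lemma exists_transversal {n : ℕ} (a : SetPart n) {s t : Fin n} (hst : s ≠ t)
    (h : SameBlk a s t) : ∃ T : Finset (Fin n), T.card = a.parts.card + 1 ∧ s ∈ T ∧ t ∈ T ∧
      ∀ i ∈ T, ∀ j ∈ T, i ≠ j → SameBlk a i j → (i = s ∧ j = t) ∨ (i = t ∧ j = s) := by
  have hf : ∀ c : Finset (Fin n), ∃ k, c ∈ a.parts → (k ∈ c ∧ (s ∈ c → k = s)) := by
    intro c
    by_cases hs : s ∈ c
    · exact ⟨s, fun _ => ⟨hs, fun _ => rfl⟩⟩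
    · by_cases hc : c ∈ a.parts
      · obtain ⟨k, hk⟩ := a.nonempty_of_mem_parts hc
        exact ⟨k, fun _ => ⟨hk, fun h => absurd h hs⟩⟩
      · exact ⟨s, fun h => absurd h hc⟩
  choose f hf using hf
  obtain ⟨b, hb, hsb, htb⟩ := h
  have hinj : Set.InjOn f a.parts := by
    intro c hc d hd e
    exact blk_eq a hc hd (hf c hc).1 (e ▸ (hf d hd).1)
  have ht : t ∉ a.parts.image f := by
    intro h
    obtain ⟨c, hc, e⟩ := mem_image.1 h
    have h1 := hf c hc
    have : c = b := blk_eq a hc hb (e ▸ h1.1) htb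
    subst this
    exact hst ((h1.2 hsb).symm.trans e)
  refine ⟨insert t (a.parts.image f), ?_, ?_, mem_insert_self _ _, ?_⟩
  · rw [card_insert_of_notMem ht, card_image_of_injOn hinj]
  · exact mem_insert_of_mem (mem_image.2 ⟨b, hb, (hf b hb).2 hsb⟩)
  · rintro i hi j hj hne ⟨c, hc, hic, hjc⟩
    have key : ∀ k ∈ insert t (a.parts.image f), k ∈ c → k ≠ t → k = f c := by
      intro k hk hkc hkt
      obtain ⟨d, hd, rfl⟩ := mem_image.1 ((mem_insert.1 hk).resolve_left hkt)
      rw [blk_eq a hd hc (hf d hd).1 hkc]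
    have key2 : t ∈ c → f c = s := by
      intro h
      have : c = b := blk_eq a hc hb h htb
      subst this
      exact (hf c hc).2 hsb
    have k1 := key i hi hic
    have k2 := key j hj hjc
    by_cases hit : i = t
    · right
      subst hit
      exact ⟨rfl, (k2 hne.symm).trans (key2 hic)⟩
    · by_cases hjt : j = t
      · left
        subst hjt
        exact ⟨(k1 hit).trans (key2 hjc), rfl⟩
      · exact absurd ((k1 hit).trans (k2 hjt).symm) hne

lemma exists_perm {n : ℕ} (T B : Finset (Fin n)) (hc : T.card = B.card) {s t u v : Fin n}
    (hs : s ∈ T) (ht : t ∈ T) (hu : u ∈ B) (hv : v ∈ B) (hst : s ≠ t) (huv : u ≠ v) :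
    ∃ g : Equiv.Perm (Fin n), (∀ i, g i ∈ B → i ∈ T) ∧ g s = u ∧ g t = v := by
  obtain ⟨g, hg⟩ : ∃ g : Equiv.Perm (Fin n), ∀ i, g i ∈ B ↔ i ∈ T := by
    let e := Finset.equivOfCardEq hc
    refine ⟨e.extendSubtype, fun i => ⟨fun h => ?_, fun h => e.extendSubtype_mem i h⟩⟩
    by_contra hi
    exact e.extendSubtype_not_mem i hi h
  have sw : ∀ x ∈ B, ∀ y ∈ B, ∀ k, Equiv.swap x y k ∈ B ↔ k ∈ B := by
    intro x hx y hy k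
    rw [Equiv.swap_apply_def]
    split_ifs <;> simp_all
  have hg2 : ∀ i, Equiv.swap (g s) u (g i) ∈ B ↔ i ∈ T := fun i => by
    rw [sw _ ((hg s).2 hs) _ hu, hg]
  have h2t := (hg2 t).2 ht
  refine ⟨(g.trans (Equiv.swap (g s) u)).trans (Equiv.swap (Equiv.swap (g s) u (g t)) v),
    ?_, ?_, ?_⟩
  · intro i hi
    simp only [Equiv.trans_apply] at hi
    rwa [sw _ h2t _ hv, hg2] at hi
  · simp only [Equiv.trans_apply, Equiv.swap_apply_left]
    apply Equiv.swap_apply_of_ne_of_ne _ huv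
    intro h
    have : Equiv.swap (g s) u (g s) = Equiv.swap (g s) u (g t) := by
      rw [Equiv.swap_apply_left]; exact h
    exact hst (g.injective ((Equiv.swap _ _).injective this))
  · simp

/-- Corollary 3.3 (first part): the blocker of every `S_n`-invariant antichain in
`Π_n` contains the hook-shape antichain `fi((p, 1^{n-p}))` for some `2 ≤ p ≤ n`. -/
theorem blocker_contains_hook (n : ℕ) (A : Set (SetPart n))
    (hA : IsAnti A) (hinv : SnInvariant A) :
    ∃ (p : ℕ) (hp : 2 ≤ p) (hpn : p ≤ n),
      fi {hook n p (by omega) hpn} ⊆ blocker A := by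
  obtain ⟨hne, hbot, -⟩ := hA
  obtain ⟨a, haA, hmax⟩ := Set.exists_max_image A (fun a => a.parts.card) (Set.toFinite A) hne
  have hab : a ≠ ⊥ := fun h => hbot (h ▸ haA)
  obtain ⟨s, t, hst, hab⟩ := (ne_bot_iff_sameBlk a).1 hab
  obtain ⟨T, hT, hsT, htT, hTT⟩ := exists_transversal a hst hab
  have h1 : 0 < a.parts.card := by
    obtain ⟨b, hb, -⟩ := hab
    exact card_pos.2 ⟨b, hb⟩
  have h2 : a.parts.card + 1 ≤ n := by
    rw [← hT]; exact card_finset_fin_le T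
  refine ⟨a.parts.card + 1, by omega, h2, ?_⟩
  intro x hx
  have hx' : x.parts.val.map Finset.card
      = (a.parts.card + 1) ::ₘ Multiset.replicate (n - (a.parts.card + 1)) 1 :=
    congrArg Nat.Partition.parts (show shape x = _ from hx)
  obtain ⟨B, hB, hBc, hrest⟩ := (Multiset.map_eq_cons _ _ _ _).2 hx'
  have hxB : ∀ i j, i ≠ j → SameBlk x i j → i ∈ B ∧ j ∈ B := by
    rintro i j hij ⟨c, hc, hi, hj⟩
    by_cases e : c = B
    · subst e; exact ⟨hi, hj⟩
    · exfalso
      have : c.card ∈ (x.parts.val.erase B).map Finset.card :=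
        Multiset.mem_map_of_mem _ ((Multiset.mem_erase_of_ne e).2 hc)
      rw [hrest] at this
      have := Multiset.eq_of_mem_replicate this
      exact hij (card_le_one.1 this.le i hi j hj)
  refine ⟨?_, ?_⟩
  · intro a' ha'
    rw [hits_iff]
    obtain ⟨i, hi, j, hj, hij, e⟩ := exists_ne_map_eq_of_card_lt_of_maps_to
      (s := B) (t := a'.parts) (f := a'.part) (by have := hmax a' ha'; omega)
      (fun i _ => a'.part_mem.2 (mem_univ i))
    exact ⟨i, j, hij, ⟨B, hB, hi, hj⟩, a'.part i, a'.part_mem.2 (mem_univ i),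
      a'.mem_part (mem_univ i), e ▸ a'.mem_part (mem_univ j)⟩
  · intro y hy hyx
    refine le_antisymm hyx ((le_iff_sameBlk _ _).2 fun u v huv => ?_)
    by_cases e : u = v
    · subst e; exact sameBlk_refl _ _
    by_contra hyuv
    obtain ⟨hu, hv⟩ := hxB u v e huv
    obtain ⟨g, hg, rfl, rfl⟩ := exists_perm T B (hT.trans hBc.symm) hsT htT hu hv hst e
    obtain ⟨i, j, hij, hyij, haij⟩ := (hits_iff _ _).1 (hy _ (hinv g a haA))
    obtain ⟨hi, hj⟩ := hxB i j hij ((le_iff_sameBlk _ _).1 hyx i j hyij)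
    obtain ⟨i', j', rfl, rfl, h⟩ := sameBlk_permAct g a haij
    rcases hTT i' (hg _ hi) j' (hg _ hj) (fun h => hij (h ▸ rfl)) h with ⟨rfl, rfl⟩ | ⟨rfl, rfl⟩
    · exact hyuv hyij
    · obtain ⟨b, hb, p, q⟩ := hyij
      exact hyuv ⟨b, hb, q, p⟩
end
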